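/- Let D be an (alpha,beta)-PDF-bounded distribution, let C >= 1 be a constant, suppose w_max/w_min <= C and m >= 10^6 (beta/alpha) C n log n / log log n, and run the weighted picking sequence algorithm on utilities drawn independently from D. Then there exists a constant K (depending only on alpha, beta, C) such that for all sufficiently large n, for any pair of distinct agents i,j, the integer T = 100 * ceil((beta/alpha)*(w_i/w_j)*log(m)/log log(m)) satisfies: (a) t_i(m) >= T >= 1; (b) with probability at least 1 - K/m^3, agent i's T-th picked item g^i_T satisfies u_i(g^i_T) >= 1/2; and (c) with probability at least 1 - K/m^3, sum over k in [T] and ell in [tau_k] of (1 - u_i(g^j_{k,ell})/u_i(g^i_k)) is at least 2, where g^i_k is agent i's k-th picked item, g^j_{k,ell} (ell in [tau_k]) are the items agent j picks strictly between agent i's k-th and (k+1)-th picks (for k = 1 excluding agent j's first picked item, and for k = t_i(m) counting agent j's picks after agent i's last pick). -/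

import Mathlib

open Finset MeasureTheory
open scoped ENNReal

open Finset

/-- `pickCount picker i s` is the number of picks made by agent `i` among the first `s` steps. -/
def pickCount {n m : ℕ} (picker : Fin m → Fin n) (i : Fin n) (s : ℕ) : ℕ :=
  (Finset.univ.filter fun s' : Fin m => (s' : ℕ) < s ∧ picker s' = i).card

/-- A run of the weighted picking sequence algorithm (for an arbitrary tie-breaking rule):
at step `s`, agent `picker s` picks item `item s`.  The picking agent must minimize
`t_i / w_i` among all agents, and the picked item must maximize her utility among the
items that have not been picked at earlier steps. -/
structure IsWPSRun {n m : ℕ} (w : Fin n → ℝ) (u : Fin n → Fin m → ℝ)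
    (picker : Fin m → Fin n) (item : Fin m → Fin m) : Prop where
  item_inj : Function.Injective item
  min_ratio : ∀ s : Fin m, ∀ j : Fin n,
    (pickCount picker (picker s) (s : ℕ) : ℝ) / w (picker s)
      ≤ (pickCount picker j (s : ℕ) : ℝ) / w j
  best_item : ∀ s g : Fin m, (∀ s' : Fin m, (s' : ℕ) < (s : ℕ) → item s' ≠ g) →
    u (picker s) g ≤ u (picker s) (item s)

/-- A probability distribution `D` on `[0,1]` is `(α,β)`-PDF-bounded if it has a density
`f` (with respect to Lebesgue measure restricted to `[0,1]`) satisfying `α ≤ f(x) ≤ β`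
for all `x ∈ [0,1]`.  (Such a distribution is in particular non-atomic.) -/
def PDFBounded (α β : ℝ) (D : MeasureTheory.Measure ℝ) : Prop :=
  ∃ f : ℝ → ℝ≥0∞,
    D = (MeasureTheory.volume.restrict (Set.Icc (0:ℝ) 1)).withDensity f ∧
    ∀ x ∈ Set.Icc (0:ℝ) 1, ENNReal.ofReal α ≤ f x ∧ f x ≤ ENNReal.ofReal β

/-- The joint distribution of the `n·m` utilities `u i g`, drawn independently from `D`. -/
noncomputable def utilMeasure (n m : ℕ) (D : MeasureTheory.Measure ℝ) :
    MeasureTheory.Measure (Fin n → Fin m → ℝ) :=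
  MeasureTheory.Measure.pi fun _ : Fin n => MeasureTheory.Measure.pi fun _ : Fin m => D

/-- The utility that agent `i` has for the `k`-th item she picks (`k` is 1-indexed):
the `k`-th pick of agent `i` occurs at the unique step `s` with `picker s = i` and
`pickCount picker i s = k - 1`, so the sum below has exactly one term whenever
`1 ≤ k ≤ t_i(m)`. -/
noncomputable def pickVal {n m : ℕ} (u : Fin n → Fin m → ℝ) (picker : Fin m → Fin n)
    (item : Fin m → Fin m) (i : Fin n) (k : ℕ) : ℝ :=
  ∑ s ∈ Finset.univ.filter
      (fun s : Fin m => picker s = i ∧ pickCount picker i (s : ℕ) = k - 1),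
    u i (item s)

/-- The sum `∑_{k ∈ [T]} ∑_{ℓ ∈ [τ_k]} (1 - u_i(g^j_{k,ℓ})/u_i(g^i_k))`: it ranges over
the picks of agent `j` other than her first pick, where a pick of agent `j` at step `s`
belongs to interval `k = max(1, t_i(s))` (the items agent `j` picks strictly between
agent `i`'s `k`-th and `(k+1)`-th picks, with the items picked before agent `i`'s second
pick in interval `1`, and those after agent `i`'s last pick in interval `t_i(m)`), and
only intervals `k ≤ T` are counted. -/
noncomputable def intervalSum {n m : ℕ} (u : Fin n → Fin m → ℝ) (picker : Fin m → Fin n)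
    (item : Fin m → Fin m) (i j : Fin n) (T : ℕ) : ℝ :=
  ∑ s ∈ Finset.univ.filter
      (fun s : Fin m => picker s = j ∧ 1 ≤ pickCount picker j (s : ℕ) ∧
        pickCount picker i (s : ℕ) ≤ T),
    (1 - u i (item s) / pickVal u picker item i (max 1 (pickCount picker i (s : ℕ))))

theorem lintegral_pi_prod_eq {ι : Type*} [Fintype ι] {X : ι → Type*} [∀ i, MeasurableSpace (X i)]
    (μ : ∀ i, Measure (X i)) [∀ i, IsProbabilityMeasure (μ i)] (f : ∀ i, X i → ℝ≥0∞)
    (hf : ∀ i, Measurable (f i)) :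
    ∫⁻ x, ∏ i, f i (x i) ∂Measure.pi μ = ∏ i, ∫⁻ x, f i x ∂μ i := by
  have hind := ProbabilityTheory.iIndepFun_pi (μ := μ) (X := f) (fun i => (hf i).aemeasurable)
  have h := ProbabilityTheory.lintegral_prod_eq_prod_lintegral_of_indepFun (μ := Measure.pi μ)
    Finset.univ (fun i (x : ∀ i, X i) => f i (x i)) hind
    (fun i => (hf i).comp (measurable_pi_apply i))
  rw [h]
  refine Finset.prod_congr rfl fun i _ => ?_
  exact (measurePreserving_eval μ i).lintegral_comp (hf i)

/-- If on `E` each coordinate `k ∈ S` lies in a set of measure at most `c` determined by the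
coordinates outside `S`, then `E` has measure at most `c ^ #S`. -/
theorem pi_measure_le_pow {ι Ω : Type*} [Fintype ι] [DecidableEq ι] [MeasurableSpace Ω]
    (ν : Measure Ω) [IsProbabilityMeasure ν] (S : Finset ι) (E : Set (ι → Ω))
    (hE : MeasurableSet E) (F : (ι → Ω) → ι → Set Ω)
    (hF : ∀ x y, (∀ i ∉ S, x i = y i) → F x = F y)
    (hEF : ∀ x ∈ E, ∀ k ∈ S, x k ∈ F x k) (c : ℝ≥0∞) (hc : ∀ x, ∀ k ∈ S, ν (F x k) ≤ c) :
    Measure.pi (fun _ : ι => ν) E ≤ c ^ S.card := by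
  have hone : Measurable (E.indicator (fun _ => (1 : ℝ≥0∞))) := measurable_one.indicator hE
  have key : ∀ x, (∫⋯∫⁻_S, E.indicator (fun _ => (1 : ℝ≥0∞)) ∂(fun _ => ν)) x ≤ c ^ S.card := by
    intro x
    unfold lmarginal
    have hmeas : MeasurableSet {y : S → Ω | Function.updateFinset x S y ∈ E} :=
      (measurable_updateFinset (x := x)) hE
    have h1 : ∀ y : S → Ω, E.indicator (fun _ => (1 : ℝ≥0∞)) (Function.updateFinset x S y) =
        {y : S → Ω | Function.updateFinset x S y ∈ E}.indicator (fun _ => 1) y := by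
      intro y; simp [Set.indicator]
    simp_rw [h1]
    rw [lintegral_indicator hmeas]
    simp only [lintegral_const, one_mul, Measure.restrict_apply MeasurableSet.univ, Set.univ_inter]
    calc _ ≤ Measure.pi (fun _ : S => ν) (Set.univ.pi fun k : S => F x k) := by
          apply measure_mono
          intro y hy k _
          have := hEF _ hy k k.2
          rw [hF _ x (fun i hi => by simp [Function.updateFinset, hi])] at this
          simpa [Function.updateFinset] using this
      _ = ∏ k : S, ν (F x k) := Measure.pi_pi _ _
      _ ≤ ∏ k : S, c := Finset.prod_le_prod' fun k _ => hc x k k.2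
      _ = c ^ S.card := by simp
  rw [← lintegral_indicator_one hE]
  calc _ ≤ ∫⁻ x, c ^ S.card ∂Measure.pi (fun _ : ι => ν) := by
        refine lintegral_le_of_lmarginal_le S hone measurable_const ?_
        intro x
        refine (key x).trans ?_
        simp [lmarginal]
    _ = _ := by simp

theorem measure_card_le_choose {Ω ι : Type*} [MeasurableSpace Ω] (μ : Measure Ω) [DecidableEq ι]
    (Y : Finset ι) (A : ι → Set Ω) [∀ x, DecidablePred fun i => x ∈ A i] (c : ℝ≥0∞) (r : ℕ)
    (h : ∀ J ⊆ Y, J.card = r → μ (⋂ i ∈ J, A i) ≤ c ^ r) :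
    μ {x | r ≤ (Y.filter fun i => x ∈ A i).card} ≤ Y.card.choose r * c ^ r := by
  calc _ ≤ μ (⋃ J ∈ Y.powersetCard r, ⋂ i ∈ J, A i) := by
        apply measure_mono
        intro x hx
        obtain ⟨J, hJ, hJc⟩ := Finset.exists_subset_card_eq (show r ≤ _ from hx)
        simp only [Set.mem_iUnion, Set.mem_iInter]
        refine ⟨J, Finset.mem_powersetCard.2 ⟨hJ.trans (Finset.filter_subset _ _), hJc⟩, ?_⟩
        intro i hi
        exact (Finset.mem_filter.1 (hJ hi)).2
    _ ≤ ∑ J ∈ Y.powersetCard r, μ (⋂ i ∈ J, A i) := measure_biUnion_finset_le _ _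
    _ ≤ ∑ J ∈ Y.powersetCard r, c ^ r := by
        refine Finset.sum_le_sum fun J hJ => ?_
        rw [Finset.mem_powersetCard] at hJ
        exact h J hJ.1 hJ.2
    _ = _ := by simp [Finset.card_powersetCard]

/-- The items valued at least `θ`. -/
noncomputable def upperItems {m : ℕ} (θ : ℝ) (x : Fin m → ℝ) : Finset (Fin m) :=
  Finset.univ.filter fun g => θ ≤ x g

theorem mem_upperItems {m : ℕ} {θ : ℝ} {x : Fin m → ℝ} {g : Fin m} :
    g ∈ upperItems θ x ↔ θ ≤ x g := by
  simp [upperItems]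

theorem upperItems_anti {m : ℕ} {θ θ' : ℝ} (h : θ ≤ θ') (x : Fin m → ℝ) :
    upperItems θ' x ⊆ upperItems θ x := fun g hg => by
  rw [mem_upperItems] at *; linarith

theorem measurable_upperItems {m : ℕ} (θ : ℝ) :
    Measurable[_, ⊤] (fun x : Fin m → ℝ => upperItems θ x) := by
  let _ : MeasurableSpace (Finset (Fin m)) := ⊤
  refine measurable_to_countable' fun J => ?_
  have : (fun x : Fin m → ℝ => upperItems θ x) ⁻¹' {J} =
      ⋂ g : Fin m, {x | θ ≤ x g ↔ g ∈ J} := by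
    ext x
    simp [Finset.ext_iff, mem_upperItems]
  rw [this]
  refine MeasurableSet.iInter fun g => ?_
  by_cases hg : g ∈ J
  · simpa [hg] using measurableSet_le measurable_const (measurable_pi_apply g)
  · simpa [hg] using measurableSet_lt (measurable_pi_apply g) measurable_const

theorem choose_mul_pow_le_exp (N r : ℕ) {q : ℝ} (hq : 0 ≤ q) :
    (N.choose r : ℝ) * q ^ r ≤ (Real.exp 1 * (N * q) / r) ^ r := by
  rcases Nat.eq_zero_or_pos r with rfl | hr
  · simp
  have hr' : (0 : ℝ) < r := by exact_mod_cast hr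
  have h1 : (N.choose r : ℝ) ≤ N ^ r / r.factorial := Nat.choose_le_pow_div r N
  have h2 : (r : ℝ) ^ r / r.factorial ≤ Real.exp r :=
    Real.pow_div_factorial_le_exp r (by positivity) r
  have h3 : Real.exp r = Real.exp 1 ^ r := by rw [← Real.exp_nat_mul]; simp
  have hf : (0 : ℝ) < r.factorial := by exact_mod_cast r.factorial_pos
  calc (N.choose r : ℝ) * q ^ r ≤ N ^ r / r.factorial * q ^ r := by gcongr
    _ = (N * q / r) ^ r * ((r : ℝ) ^ r / r.factorial) := by
        rw [div_pow, mul_pow]; field_simp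
    _ ≤ (N * q / r) ^ r * Real.exp 1 ^ r := by rw [← h3]; gcongr
    _ = _ := by rw [← mul_pow]; congr 1; ring

section Tails

variable {m : ℕ} (D : Measure ℝ) [IsProbabilityMeasure D]

theorem measure_le_card_upperItems_inter {θ q : ℝ} (hq : 0 ≤ q)
    (hD : D (Set.Ici θ) = ENNReal.ofReal q) (Y : Finset (Fin m)) (r : ℕ) :
    Measure.pi (fun _ : Fin m => D) {x | r ≤ (upperItems θ x ∩ Y).card} ≤
      ENNReal.ofReal ((Real.exp 1 * (Y.card * q) / r) ^ r) := by
  classical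
  have h := measure_card_le_choose (Measure.pi (fun _ : Fin m => D)) Y
    (fun g => {x : Fin m → ℝ | θ ≤ x g}) (ENNReal.ofReal q) r ?_
  · refine le_trans (le_of_eq ?_) (h.trans ?_)
    · congr 1
      ext x
      have : upperItems θ x ∩ Y = Y.filter fun i => θ ≤ x i := by
        ext g; simp [mem_upperItems, and_comm]
      simp [this]
    · rw [← ENNReal.ofReal_pow hq, ← ENNReal.ofReal_natCast, ← ENNReal.ofReal_mul (by positivity)]
      exact ENNReal.ofReal_le_ofReal (choose_mul_pow_le_exp _ _ hq)
  · intro J _ hJ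
    have : (⋂ i ∈ J, {x : Fin m → ℝ | θ ≤ x i}) =
        Set.univ.pi fun i => if i ∈ J then Set.Ici θ else Set.univ := by
      ext x
      simp only [Set.mem_iInter, Set.mem_ofPred_eq, Set.mem_pi, Set.mem_univ, true_implies]
      refine forall_congr' fun i => ?_
      by_cases hi : i ∈ J <;> simp [hi]
    rw [this, Measure.pi_pi]
    have : ∀ i : Fin m, D (if i ∈ J then Set.Ici θ else Set.univ) =
        if i ∈ J then ENNReal.ofReal q else 1 := by
      intro i; split_ifs <;> simp [hD]
    simp [this, hJ]

theorem measure_card_upperItems_sdiff_le {θ θ' q q' : ℝ} (hq : 0 ≤ q) (hq1 : q ≤ 1)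
    (hD : D (Set.Ici θ) = ENNReal.ofReal q) (hD' : D (Set.Ici θ') = ENNReal.ofReal q')
    (Y G : Finset (Fin m)) (r : ℕ) :
    Measure.pi (fun _ : Fin m => D)
      {x | (upperItems θ x \ Y).card ≤ r ∧ ∀ g ∈ G, θ' ≤ x g} ≤
      ENNReal.ofReal q' ^ G.card *
        ENNReal.ofReal (2 ^ r * (1 - q / 2) ^ (m - Y.card - G.card)) := by
  classical
  set f : Fin m → ℝ → ℝ≥0∞ := fun g t =>
    if g ∈ G then (Set.Ici θ').indicator 1 t else
      if g ∈ Y then 1 else (if θ ≤ t then 2⁻¹ else 1) with hf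
  have hfm : ∀ g, Measurable (f g) := by
    intro g
    simp only [hf]
    split_ifs
    · exact measurable_one.indicator measurableSet_Ici
    · exact measurable_const
    · exact Measurable.ite measurableSet_Ici measurable_const measurable_const
  have hint : ∀ g, ∫⁻ t, f g t ∂D ≤
      if g ∈ G then ENNReal.ofReal q' else if g ∈ Y then 1 else ENNReal.ofReal (1 - q / 2) := by
    intro g
    simp only [hf]
    split_ifs
    · rw [lintegral_indicator_one measurableSet_Ici, hD']
    · simp
    · have : (fun t : ℝ => if θ ≤ t then (2⁻¹ : ℝ≥0∞) else 1) =
          fun t => (Set.Ici θ).indicator (fun _ => 2⁻¹) t + (Set.Ici θ)ᶜ.indicator (fun _ => 1) t := by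
        ext t
        by_cases ht : θ ≤ t <;> simp [ht, Set.indicator, not_lt.2, lt_of_not_ge]
      rw [this, lintegral_add_left (measurable_const.indicator measurableSet_Ici),
        lintegral_indicator measurableSet_Ici, lintegral_indicator measurableSet_Ici.compl]
      simp only [lintegral_const, Measure.restrict_apply MeasurableSet.univ, Set.univ_inter,
        one_mul]
      rw [prob_compl_eq_one_sub measurableSet_Ici, hD,
        show (2⁻¹ : ℝ≥0∞) = ENNReal.ofReal 2⁻¹ by
          rw [ENNReal.ofReal_inv_of_pos (by norm_num)]; simp,
        ← ENNReal.ofReal_mul (by norm_num), ← ENNReal.ofReal_one, ← ENNReal.ofReal_sub _ hq,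
        ← ENNReal.ofReal_add (by positivity) (by linarith)]
      exact ENNReal.ofReal_le_ofReal (by linarith)
  set E : Set (Fin m → ℝ) := {x | (upperItems θ x \ Y).card ≤ r ∧ ∀ g ∈ G, θ' ≤ x g} with hE
  have hm : MeasurableSet E := by
    refine MeasurableSet.inter ?_ ?_
    · let _ : MeasurableSpace (Finset (Fin m)) := ⊤
      exact (measurable_upperItems θ) (t := {A | (A \ Y).card ≤ r}) trivial
    · have : {x : Fin m → ℝ | ∀ g ∈ G, θ' ≤ x g} = ⋂ g ∈ G, {x | θ' ≤ x g} := by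
        ext; simp
      change MeasurableSet {x : Fin m → ℝ | ∀ g ∈ G, θ' ≤ x g}
      rw [this]
      exact Finset.measurableSet_biInter _ fun g _ =>
        measurableSet_le measurable_const (measurable_pi_apply g)
  have hpoint : ∀ x, E.indicator (1 : (Fin m → ℝ) → ℝ≥0∞) x ≤ 2 ^ r * ∏ g, f g (x g) := by
    intro x
    by_cases hx : x ∈ E
    · rw [Set.indicator_of_mem hx]
      obtain ⟨hx1, hx2⟩ := hx
      have hfx : ∀ g, (if g ∈ upperItems θ x \ Y then (2⁻¹ : ℝ≥0∞) else 1) ≤ f g (x g) := by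
        intro g
        simp only [hf, Finset.mem_sdiff, mem_upperItems]
        by_cases hg : g ∈ G
        · have := hx2 g hg
          simp only [hg, if_true, Set.indicator, Set.mem_Ici, this, Pi.one_apply]
          split_ifs <;> simp
        · by_cases hy : g ∈ Y
          · simp [hg, hy]
          · simp [hg, hy]
      have hprod : (2⁻¹ : ℝ≥0∞) ^ r ≤ ∏ g, f g (x g) := by
        calc (2⁻¹ : ℝ≥0∞) ^ r ≤ 2⁻¹ ^ (upperItems θ x \ Y).card :=
              pow_le_pow_right_of_le_one' (by simp) hx1
          _ = ∏ g, (if g ∈ upperItems θ x \ Y then (2⁻¹ : ℝ≥0∞) else 1) := by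
              rw [Finset.prod_ite_mem, Finset.univ_inter, Finset.prod_const]
          _ ≤ _ := Finset.prod_le_prod' fun g _ => hfx g
      calc (1 : ℝ≥0∞) = 2 ^ r * 2⁻¹ ^ r := by
            rw [← mul_pow, ENNReal.mul_inv_cancel (by simp) (by simp), one_pow]
        _ ≤ _ := by gcongr
    · rw [Set.indicator_of_notMem hx]; exact zero_le
  calc Measure.pi (fun _ : Fin m => D) E
      ≤ ∫⁻ x, E.indicator 1 x ∂Measure.pi (fun _ : Fin m => D) := by
        rw [lintegral_indicator_one hm]
    _ ≤ ∫⁻ x, 2 ^ r * ∏ g, f g (x g) ∂Measure.pi (fun _ : Fin m => D) := lintegral_mono hpoint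
    _ = 2 ^ r * ∏ g, ∫⁻ t, f g t ∂D := by
        have hpm : Measurable fun x : Fin m → ℝ => ∏ g, f g (x g) :=
          Finset.measurable_fun_prod _ fun g _ => (hfm g).comp (measurable_pi_apply g)
        rw [lintegral_const_mul _ hpm, lintegral_pi_prod_eq _ _ hfm]
    _ ≤ 2 ^ r * ∏ g, (if g ∈ G then ENNReal.ofReal q' else
          if g ∈ Y then 1 else ENNReal.ofReal (1 - q / 2)) := by
        gcongr with g; exact hint g
    _ = 2 ^ r * (ENNReal.ofReal q' ^ G.card *
          ENNReal.ofReal (1 - q / 2) ^ ((Finset.univ \ G) \ Y).card) := by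
        congr 1
        rw [Finset.prod_ite, Finset.prod_ite]
        have h1 : (Finset.univ.filter fun g => g ∈ G) = G := by ext; simp
        have h2 : ((Finset.univ.filter fun g => g ∉ G).filter fun g => g ∉ Y) =
          (Finset.univ \ G) \ Y := by ext; simp
        simp only [Finset.prod_const, one_pow, one_mul, h1, h2]
    _ ≤ 2 ^ r * (ENNReal.ofReal q' ^ G.card *
          ENNReal.ofReal (1 - q / 2) ^ (m - Y.card - G.card)) := by
        gcongr 2 ^ r * (_ * ?_)
        refine pow_le_pow_right_of_le_one' (ENNReal.ofReal_le_one.2 (by linarith)) ?_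
        have h1 := Finset.le_card_sdiff Y (Finset.univ \ G)
        have h2 := Finset.le_card_sdiff G Finset.univ
        simp only [Finset.card_univ, Fintype.card_fin] at h1 h2
        omega
    _ = _ := by
        rw [ENNReal.ofReal_mul (by positivity), ENNReal.ofReal_pow (by norm_num),
          ENNReal.ofReal_pow (by linarith)]
        simp only [ENNReal.ofReal_ofNat]
        ring

end Tails

/-- If level-2 sets overlap little, are large outside the level-1 sets of the other agents, and no
agent has `p` poor neighbours, then agents can be split into two classes such that, when each agent uses
the level of her class, more than `R` of her items are outside all the other agents' sets. -/
theorem exists_level_assignment {n m : ℕ} (Q₁ Q₂ : Fin n → Finset (Fin m)) (R p : ℕ)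
    (hp : 5 * p ≤ R) (hsub : ∀ k, Q₁ k ⊆ Q₂ k)
    (hpair : ∀ k k', k ≠ k' → (Q₂ k ∩ Q₂ k').card ≤ 5)
    (hlarge : ∀ k, 2 * R < (Q₂ k \ (Finset.univ.erase k).biUnion Q₁).card)
    (hlocal : ∀ (k : Fin n) (S : Finset (Fin n)), k ∉ S → S.card = p → ∃ k' ∈ S,
      3 * R < (Q₁ k' \ (Finset.univ \ insert k S).biUnion Q₁).card ∨ Q₂ k' ∩ Q₂ k = ∅) :
    ∃ C : Finset (Fin n), ∀ k, R < ((if k ∈ C then Q₂ k else Q₁ k) \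
      (Finset.univ.erase k).biUnion fun k' => if k' ∈ C then Q₂ k' else Q₁ k').card := by
  classical
  set C := Finset.univ.filter fun k => (Q₁ k \ (Finset.univ.erase k).biUnion Q₁).card ≤ 2 * R with hC
  refine ⟨C, fun k => ?_⟩
  have hW : (Q₂ k ∩ (C.erase k).biUnion Q₂).card ≤ R := by
    by_contra hcon
    push Not at hcon
    set S := (C.erase k).filter fun k' => (Q₂ k' ∩ Q₂ k).Nonempty with hS
    have hcover : Q₂ k ∩ (C.erase k).biUnion Q₂ ⊆ S.biUnion fun k' => Q₂ k ∩ Q₂ k' := by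
      intro g hg
      simp only [Finset.mem_inter, Finset.mem_biUnion] at hg ⊢
      obtain ⟨hg, k', hk', hg'⟩ := hg
      exact ⟨k', Finset.mem_filter.2 ⟨hk', g, by simp [hg, hg']⟩, hg, hg'⟩
    have hcard : (Q₂ k ∩ (C.erase k).biUnion Q₂).card ≤ S.card * 5 := by
      refine (Finset.card_le_card hcover).trans (Finset.card_biUnion_le_card_mul _ _ _ ?_)
      intro k' hk'
      refine hpair k k' ?_
      rintro rfl
      simp [hS] at hk'
    obtain ⟨S', hS', hS'c⟩ := Finset.exists_subset_card_eq (show p ≤ S.card by omega)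
    have hkS' : k ∉ S' := fun h => by
      have := hS' h
      simp [hS] at this
    obtain ⟨k', hk', h⟩ := hlocal k S' hkS' hS'c
    have hk'S := hS' hk'
    rw [hS, Finset.mem_filter, Finset.mem_erase, hC, Finset.mem_filter] at hk'S
    obtain ⟨⟨hne, -, hk'C⟩, hk'N⟩ := hk'S
    rcases h with h | h
    · have hsubset : Q₁ k' \ (Finset.univ \ insert k S').biUnion Q₁ ⊆
          (Q₁ k' \ (Finset.univ.erase k').biUnion Q₁) ∪
            ((insert k S').erase k').biUnion fun l => Q₂ k' ∩ Q₂ l := by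
        intro g hg
        rw [Finset.mem_sdiff] at hg
        obtain ⟨hg1, hg2⟩ := hg
        by_cases hgl : g ∈ (Finset.univ.erase k').biUnion Q₁
        · obtain ⟨l, hl, hgl⟩ := Finset.mem_biUnion.1 hgl
          refine Finset.mem_union_right _ (Finset.mem_biUnion.2 ⟨l, ?_, ?_⟩)
          · refine Finset.mem_erase.2 ⟨Finset.ne_of_mem_erase hl, ?_⟩
            by_contra hlS
            exact hg2 (Finset.mem_biUnion.2
              ⟨l, by simp only [Finset.mem_sdiff, Finset.mem_univ, true_and]; exact hlS, hgl⟩)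
          · exact Finset.mem_inter.2 ⟨hsub _ hg1, hsub _ hgl⟩
        · exact Finset.mem_union_left _ (Finset.mem_sdiff.2 ⟨hg1, hgl⟩)
      have h1 := (Finset.card_le_card hsubset).trans (Finset.card_union_le _ _)
      have h2 : (((insert k S').erase k').biUnion fun l => Q₂ k' ∩ Q₂ l).card ≤
          ((insert k S').erase k').card * 5 := by
        refine Finset.card_biUnion_le_card_mul _ _ _ fun l hl => hpair _ _ ?_
        exact (Finset.ne_of_mem_erase hl).symm
      have h3 : ((insert k S').erase k').card = p := by
        rw [Finset.card_erase_of_mem (Finset.mem_insert_of_mem hk'),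
          Finset.card_insert_of_notMem hkS', hS'c]
        omega
      rw [h3] at h2
      omega
    · exact hk'N.ne_empty h
  have hsplit : ∀ A : Finset (Fin m), A ⊆ Q₂ k →
      2 * R < (A \ (Finset.univ.erase k).biUnion Q₁).card →
      R < (A \ (Finset.univ.erase k).biUnion fun k' => if k' ∈ C then Q₂ k' else Q₁ k').card := by
    intro A hA hAc
    have hsubset : A \ (Finset.univ.erase k).biUnion Q₁ ⊆
        (A \ (Finset.univ.erase k).biUnion fun k' => if k' ∈ C then Q₂ k' else Q₁ k') ∪
          (Q₂ k ∩ (C.erase k).biUnion Q₂) := by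
      intro g hg
      rw [Finset.mem_sdiff] at hg
      obtain ⟨hg1, hg2⟩ := hg
      by_cases hgl : g ∈ (Finset.univ.erase k).biUnion fun k' => if k' ∈ C then Q₂ k' else Q₁ k'
      · obtain ⟨l, hl, hgl⟩ := Finset.mem_biUnion.1 hgl
        by_cases hlC : l ∈ C
        · rw [if_pos hlC] at hgl
          exact Finset.mem_union_right _ (Finset.mem_inter.2 ⟨hA hg1, Finset.mem_biUnion.2
            ⟨l, Finset.mem_erase.2 ⟨Finset.ne_of_mem_erase hl, hlC⟩, hgl⟩⟩)
        · rw [if_neg hlC] at hgl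
          exact absurd (Finset.mem_biUnion.2 ⟨l, hl, hgl⟩) hg2
      · exact Finset.mem_union_left _ (Finset.mem_sdiff.2 ⟨hg1, hgl⟩)
    have := (Finset.card_le_card hsubset).trans (Finset.card_union_le _ _)
    omega
  by_cases hk : k ∈ C
  · rw [if_pos hk]
    exact hsplit _ subset_rfl (hlarge k)
  · rw [if_neg hk]
    refine hsplit _ (hsub k) ?_
    simpa [hC] using hk

section Run

variable {n m : ℕ} {w : Fin n → ℝ} {u : Fin n → Fin m → ℝ} {picker : Fin m → Fin n}
  {item : Fin m → Fin m}

theorem pickCount_mono (picker : Fin m → Fin n) (i : Fin n) : Monotone (pickCount picker i) := by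
  intro s t hst
  unfold pickCount
  refine Finset.card_le_card fun x hx => ?_
  simp only [Finset.mem_filter, Finset.mem_univ, true_and] at hx ⊢
  exact ⟨hx.1.trans_le hst, hx.2⟩

theorem pickCount_succ (picker : Fin m → Fin n) (i : Fin n) (s : Fin m) :
    pickCount picker i (s + 1) = pickCount picker i s + if picker s = i then 1 else 0 := by
  unfold pickCount
  have : (Finset.univ.filter fun x : Fin m => (x : ℕ) < (s : ℕ) + 1 ∧ picker x = i) =
      (Finset.univ.filter fun x : Fin m => (x : ℕ) < (s : ℕ) ∧ picker x = i) ∪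
        (if picker s = i then {s} else ∅) := by
    ext x
    by_cases h : picker s = i
    · simp only [h, if_true, Finset.mem_filter, Finset.mem_univ, true_and, Finset.mem_union,
        Finset.mem_singleton]
      constructor
      · rintro ⟨h1, h2⟩
        rcases Nat.lt_succ_iff_lt_or_eq.1 h1 with h1 | h1
        · exact Or.inl ⟨h1, h2⟩
        · exact Or.inr (Fin.ext h1)
      · rintro (⟨h1, h2⟩ | rfl)
        · exact ⟨by omega, h2⟩
        · exact ⟨by omega, h⟩
    · simp only [h, if_false, Finset.mem_filter, Finset.mem_univ, true_and, Finset.union_empty]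
      constructor
      · rintro ⟨h1, h2⟩
        rcases Nat.lt_succ_iff_lt_or_eq.1 h1 with h1 | h1
        · exact ⟨h1, h2⟩
        · exact absurd (by rw [← h2, show x = s from Fin.ext h1]) h
      · rintro ⟨h1, h2⟩
        exact ⟨by omega, h2⟩
  rw [this, Finset.card_union_of_disjoint]
  · split_ifs <;> simp
  · split_ifs <;> simp

theorem pickCount_zero (picker : Fin m → Fin n) (i : Fin n) : pickCount picker i 0 = 0 := by
  simp [pickCount]

theorem sum_pickCount (picker : Fin m → Fin n) : ∑ i, pickCount picker i m = m := by
  unfold pickCount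
  have := Finset.card_eq_sum_card_fiberwise (s := (Finset.univ : Finset (Fin m)))
    (t := (Finset.univ : Finset (Fin n))) (f := picker) (by simp)
  simpa using this.symm

/-- The step at which agent `i` makes her `(c+1)`-st pick. -/
theorem exists_pick_step {i : Fin n} {c s : ℕ} (hs : s ≤ m) (hc : c < pickCount picker i s) :
    ∃ t : Fin m, (t : ℕ) < s ∧ picker t = i ∧ pickCount picker i t = c := by
  induction s with
  | zero => simp [pickCount_zero] at hc
  | succ s ih =>
    have hsm : s < m := hs
    have hsucc := pickCount_succ picker i ⟨s, hsm⟩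
    simp only at hsucc
    by_cases h : c < pickCount picker i s
    · obtain ⟨t, ht, h⟩ := ih hsm.le h
      exact ⟨t, by omega, h⟩
    · refine ⟨⟨s, hsm⟩, by simp, ?_⟩
      split_ifs at hsucc with hp
      · exact ⟨hp, by simp only; omega⟩
      · omega

theorem pick_step_unique {i : Fin n} {s t : Fin m} (hs : picker s = i) (ht : picker t = i)
    (h : pickCount picker i s = pickCount picker i t) : s = t := by
  by_contra hne
  wlog hlt : s < t generalizing s t
  · exact this ht hs h.symm (Ne.symm hne) (lt_of_le_of_ne (not_lt.1 hlt) (Ne.symm hne))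
  have h1 := pickCount_succ picker i s
  rw [if_pos hs] at h1
  have h2 := pickCount_mono picker i (show (s : ℕ) + 1 ≤ t from hlt)
  omega

theorem pickVal_eq {i : Fin n} {t : Fin m} (ht : picker t = i) :
    pickVal u picker item i (pickCount picker i t + 1) = u i (item t) := by
  unfold pickVal
  have : (Finset.univ.filter fun s : Fin m => picker s = i ∧
      pickCount picker i (s : ℕ) = pickCount picker i t + 1 - 1) = {t} := by
    ext s
    simp only [Finset.mem_filter, Finset.mem_univ, true_and, Finset.mem_singleton,
      Nat.add_sub_cancel]
    constructor
    · rintro ⟨h1, h2⟩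
      exact pick_step_unique h1 ht h2
    · rintro rfl
      exact ⟨ht, rfl⟩
  rw [this, Finset.sum_singleton]

theorem IsWPSRun.balance (h : IsWPSRun w u picker item) (hw : ∀ i, 0 < w i) (k l : Fin n) {s : ℕ}
    (hs : s ≤ m) : (pickCount picker k s - 1 : ℝ) / w k ≤ pickCount picker l s / w l := by
  have hk := hw k
  have hl := hw l
  rcases Nat.eq_zero_or_pos (pickCount picker k s) with h0 | hpos
  · rw [h0]
    have : (0 : ℝ) ≤ pickCount picker l s / w l := by positivity
    have h2 : ((0 : ℕ) - 1 : ℝ) / w k ≤ 0 := div_nonpos_of_nonpos_of_nonneg (by norm_num) hk.le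
    linarith
  · obtain ⟨t, hts, htk, htc⟩ := exists_pick_step (picker := picker) (i := k)
      (c := pickCount picker k s - 1) hs (by omega)
    have h1 := h.min_ratio t l
    rw [htk, htc] at h1
    push_cast [hpos] at h1
    refine h1.trans ?_
    gcongr
    exact pickCount_mono picker l hts.le

/-- As long as no agent has made more than `R` picks, every pick is above the picking agent's
threshold. -/
theorem IsWPSRun.threshold_le (h : IsWPSRun w u picker item) (τ : Fin n → ℝ) (R s₁ : ℕ)
    (hR : ∀ k, pickCount picker k s₁ ≤ R)
    (hτ : ∀ k, R < (upperItems (τ k) (u k) \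
      (Finset.univ.erase k).biUnion fun k' => upperItems (τ k') (u k')).card)
    (s : Fin m) (hs : (s : ℕ) < s₁) : τ (picker s) ≤ u (picker s) (item s) := by
  induction s using Fin.strong_induction_on with
  | h s ih =>
    set k := picker s with hk
    set G := upperItems (τ k) (u k) \
      (Finset.univ.erase k).biUnion fun k' => upperItems (τ k') (u k') with hG
    by_cases hall : ∀ g ∈ G, ∃ s' : Fin m, s' < s ∧ item s' = g
    · exfalso
      have hsubset : G ⊆ (Finset.univ.filter fun s' : Fin m => (s' : ℕ) < (s : ℕ) ∧ picker s' = k).image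
          item := by
        intro g hg
        obtain ⟨s', hs', rfl⟩ := hall g hg
        refine Finset.mem_image.2 ⟨s', Finset.mem_filter.2 ⟨Finset.mem_univ _, hs', ?_⟩, rfl⟩
        by_contra hne
        rw [hG, Finset.mem_sdiff] at hg
        refine hg.2 (Finset.mem_biUnion.2 ⟨picker s', by simp [hne], ?_⟩)
        rw [mem_upperItems]
        exact ih s' hs' (lt_trans hs' hs)
      have h1 := (Finset.card_le_card hsubset).trans Finset.card_image_le
      have h2 : pickCount picker k s ≤ R := (pickCount_mono picker k hs.le).trans (hR k)
      exact absurd (h1.trans h2) (not_le.2 (hτ k))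
    · push Not at hall
      obtain ⟨g, hg, hgs⟩ := hall
      have h1 := h.best_item s g fun s' hs' => hgs s' hs'
      have h2 := (Finset.mem_sdiff.1 hg).1
      rw [mem_upperItems] at h2
      exact h2.trans h1

end Run

section Consequences

variable {n m : ℕ} {w : Fin n → ℝ} {u : Fin n → Fin m → ℝ} {picker : Fin m → Fin n}
  {item : Fin m → Fin m}

theorem IsWPSRun.pickCount_le (h : IsWPSRun w u picker item) (hw : ∀ i, 0 < w i) {i : Fin n}
    {T R : ℕ} (hTR : ∀ k, 1 + T * (w k / w i) ≤ (R : ℝ)) {s : ℕ} (hs : s ≤ m)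
    (hT : pickCount picker i s ≤ T) (k : Fin n) : pickCount picker k s ≤ R := by
  have h1 := h.balance hw k i hs
  have hk := hw k
  have hi := hw i
  rw [div_le_iff₀ hk] at h1
  have h2 : (pickCount picker i s : ℝ) / w i * w k ≤ T * (w k / w i) := by
    rw [div_mul_eq_mul_div, mul_div_assoc]
    gcongr
  have : (pickCount picker k s : ℝ) ≤ R := by linarith [hTR k]
  exact_mod_cast this

theorem IsWPSRun.le_pickCount (h : IsWPSRun w u picker item) (hw : ∀ i, 0 < w i) {i : Fin n}
    {T R : ℕ} (hTR : ∀ k, 1 + T * (w k / w i) ≤ (R : ℝ)) (hR : n * R < m) :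
    T ≤ pickCount picker i m := by
  by_contra hcon
  have h1 := h.pickCount_le hw hTR le_rfl (not_le.1 hcon).le
  have h2 := Finset.sum_le_card_nsmul Finset.univ _ _ fun k _ => h1 k
  rw [sum_pickCount] at h2
  simp at h2
  omega

/-- The moment right after agent `i`'s `T`-th pick. -/
theorem IsWPSRun.exists_pickCount_eq (h : IsWPSRun w u picker item) (hw : ∀ i, 0 < w i)
    {i : Fin n} {T R : ℕ} (hTR : ∀ k, 1 + T * (w k / w i) ≤ (R : ℝ)) (hR : n * R < m)
    (hT : 1 ≤ T) : ∃ t : Fin m, picker t = i ∧ pickCount picker i t + 1 = T ∧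
      pickCount picker i (t + 1) = T ∧ ∀ k, pickCount picker k (t + 1) ≤ R := by
  have h1 := h.le_pickCount hw hTR hR
  obtain ⟨t, -, ht, htc⟩ := exists_pick_step (picker := picker) (i := i) (c := T - 1) le_rfl
    (by omega)
  have h2 := pickCount_succ picker i t
  rw [if_pos ht] at h2
  have h3 : pickCount picker i (t + 1) = T := by omega
  exact ⟨t, ht, by omega, h3, h.pickCount_le hw hTR t.2 h3.le⟩

theorem IsWPSRun.le_pickVal (h : IsWPSRun w u picker item) (hw : ∀ i, 0 < w i)
    {i : Fin n} {T R : ℕ} (hTR : ∀ k, 1 + T * (w k / w i) ≤ (R : ℝ)) (hR : n * R < m)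
    (hT : 1 ≤ T) {τ : Fin n → ℝ} {θ : ℝ} (hθ : ∀ k, θ ≤ τ k)
    (hτ : ∀ k, R < (upperItems (τ k) (u k) \
      (Finset.univ.erase k).biUnion fun k' => upperItems (τ k') (u k')).card) :
    θ ≤ pickVal u picker item i T := by
  obtain ⟨t, ht, htT, -, htR⟩ := h.exists_pickCount_eq hw hTR hR hT
  have h1 := h.threshold_le τ R _ htR hτ t (Nat.lt_succ_self _)
  rw [← htT, pickVal_eq ht]
  rw [ht] at h1
  exact (hθ i).trans h1

theorem IsWPSRun.two_le_intervalSum (h : IsWPSRun w u picker item) (hw : ∀ i, 0 < w i)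
    {i j : Fin n} {T R : ℕ} (hTR : ∀ k, 1 + T * (w k / w i) ≤ (R : ℝ)) (hR : n * R < m)
    (hT : 1 ≤ T) {τ : Fin n → ℝ} {θ : ℝ} (hθ : ∀ k, θ ≤ τ k)
    (hτ : ∀ k, R < (upperItems (τ k) (u k) \
      (Finset.univ.erase k).biUnion fun k' => upperItems (τ k') (u k')).card)
    {ε : ℝ} (hε : 0 < ε) (hε1 : ε ≤ 1) (hεθ : 1 - ε / 2 ≤ θ) {r : ℕ}
    (hr : (upperItems (1 - ε) (u i) ∩ upperItems θ (u j)).card ≤ r)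
    (hcount : r + 4 / ε + 1 ≤ (T - 1) * (w j / w i)) :
    2 ≤ intervalSum u picker item i j T := by
  obtain ⟨t, ht, htT, htT', htR⟩ := h.exists_pickCount_eq hw hTR hR hT
  set s₁ := (t : ℕ) + 1 with hs₁
  have hi := hw i
  have hj := hw j
  have hval : ∀ s : Fin m, (s : ℕ) < s₁ → θ ≤ u (picker s) (item s) := fun s hs =>
    (hθ _).trans (h.threshold_le τ R _ htR hτ s hs)
  have hv : ∀ s : Fin m, picker s = j → 1 ≤ pickCount picker j s → pickCount picker i s ≤ T →
      θ ≤ pickVal u picker item i (max 1 (pickCount picker i s)) ∧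
        u i (item s) ≤ pickVal u picker item i (max 1 (pickCount picker i s)) := by
    intro s hsj hs1 hsT
    have h1 := h.min_ratio s i
    rw [hsj] at h1
    have hpos : 1 ≤ pickCount picker i s := by
      by_contra hcon
      have h0 : pickCount picker i s = 0 := by omega
      rw [h0] at h1
      have : (0 : ℝ) < pickCount picker j s / w j := div_pos (by exact_mod_cast hs1) hj
      simp at h1
      linarith
    obtain ⟨s', hs's, hs'i, hs'c⟩ := exists_pick_step (picker := picker) (i := i)
      (c := pickCount picker i s - 1) s.2.le (by omega)
    have hmax : max 1 (pickCount picker i s) = pickCount picker i s' + 1 := by omega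
    rw [hmax, pickVal_eq hs'i]
    refine ⟨?_, ?_⟩
    · have := hval s' ?_
      · rwa [hs'i] at this
      · by_contra hcon
        have := pickCount_mono picker i (not_lt.1 hcon)
        omega
    · have := h.best_item s' (item s) fun s'' hs'' heq => by
        have h2 := h.item_inj heq
        subst h2
        omega
      rwa [hs'i] at this
  set S := Finset.univ.filter (fun s : Fin m => (s : ℕ) < s₁ ∧ picker s = j) with hS
  set S₀ := S.filter fun s : Fin m => pickCount picker j s = 0 with hS₀
  set S₁ := S.filter fun s : Fin m => 1 - ε ≤ u i (item s) with hS₁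
  have hθ0 : 0 < θ := by linarith
  have hScard : S.card = pickCount picker j s₁ := rfl
  have hS₀card : S₀.card ≤ 1 := by
    refine Finset.card_le_one.2 fun a ha b hb => ?_
    simp only [hS₀, hS, Finset.mem_filter] at ha hb
    exact pick_step_unique ha.1.2.2 hb.1.2.2 (ha.2.trans hb.2.symm)
  have hS₁card : S₁.card ≤ r := by
    refine le_trans ?_ hr
    rw [← Finset.card_image_of_injective S₁ h.item_inj]
    refine Finset.card_le_card fun g hg => ?_
    obtain ⟨s, hs, rfl⟩ := Finset.mem_image.1 hg
    simp only [hS₁, hS, Finset.mem_filter] at hs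
    rw [Finset.mem_inter, mem_upperItems, mem_upperItems]
    have := hval s hs.1.2.1
    rw [hs.1.2.2] at this
    exact ⟨hs.2, this⟩
  have hSreal : (T - 1) * (w j / w i) ≤ (S.card : ℝ) := by
    have h1 := h.balance hw i j (s := s₁) t.2
    rw [htT', le_div_iff₀ hj] at h1
    rw [hScard]
    calc (T - 1) * (w j / w i) = (T - 1 : ℝ) / w i * w j := by ring
      _ ≤ _ := h1
  set S₂ := (S \ S₀) \ S₁ with hS₂
  have hS₂card : (4 / ε : ℝ) ≤ S₂.card := by
    have h1 : S.card ≤ S₂.card + 1 + r := by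
      have : (S \ S₀).card ≤ S₂.card + S₁.card := Finset.card_le_card_sdiff_add_card
      have := Finset.card_le_card_sdiff_add_card (s := S) (t := S₀)
      omega
    have h2 : (S.card : ℝ) ≤ S₂.card + 1 + r := by exact_mod_cast h1
    linarith
  have hterm : ∀ s ∈ S₂, ε / 2 ≤
      1 - u i (item s) / pickVal u picker item i (max 1 (pickCount picker i (s : ℕ))) := by
    intro s hs
    simp only [hS₂, hS₀, hS₁, hS, Finset.mem_sdiff, Finset.mem_filter, Finset.mem_univ, true_and,
      not_and, not_le] at hs
    obtain ⟨⟨⟨hs1, hsj⟩, hs0⟩, hsu⟩ := hs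
    have hsu' := hsu ⟨hs1, hsj⟩
    have hs0' := hs0 ⟨hs1, hsj⟩
    have := (hv s hsj (Nat.one_le_iff_ne_zero.2 hs0')
      ((pickCount_mono picker i hs1.le).trans htT'.le)).1
    have hvpos : 0 < pickVal u picker item i (max 1 (pickCount picker i (s : ℕ))) :=
      hθ0.trans_le this
    rw [le_sub_comm, div_le_iff₀ hvpos]
    nlinarith
  have hsub : S₂ ⊆ Finset.univ.filter (fun s : Fin m => picker s = j ∧
      1 ≤ pickCount picker j (s : ℕ) ∧ pickCount picker i (s : ℕ) ≤ T) := by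
    intro s hs
    simp only [hS₂, hS₀, hS, Finset.mem_sdiff, Finset.mem_filter, Finset.mem_univ, true_and,
      not_and] at hs ⊢
    obtain ⟨⟨⟨hs1, hsj⟩, hs0⟩, -⟩ := hs
    exact ⟨hsj, Nat.one_le_iff_ne_zero.2 (hs0 ⟨hs1, hsj⟩),
      (pickCount_mono picker i hs1.le).trans htT'.le⟩
  unfold intervalSum
  calc (2 : ℝ) = 4 / ε * (ε / 2) := by field_simp; norm_num
    _ ≤ S₂.card * (ε / 2) := by gcongr
    _ = ∑ s ∈ S₂, ε / 2 := by simp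
    _ ≤ _ := Finset.sum_le_sum hterm
    _ ≤ _ := Finset.sum_le_sum_of_subset_of_nonneg hsub fun s hs _ => by
        simp only [Finset.mem_filter, Finset.mem_univ, true_and] at hs
        have h1 := hv s hs.1 hs.2.1 hs.2.2
        rw [sub_nonneg]
        exact div_le_one_of_le₀ h1.2 (hθ0.le.trans h1.1)

end Consequences

theorem measure_exists_le {Ω ι : Type*} [MeasurableSpace Ω] (μ : Measure Ω) [Fintype ι]
    (E : ι → Set Ω) {c : ℝ} (h : ∀ k, μ (E k) ≤ ENNReal.ofReal c) :
    μ {x | ∃ k, x ∈ E k} ≤ ENNReal.ofReal (Fintype.card ι * c) := by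
  rw [ENNReal.ofReal_mul (by positivity), ENNReal.ofReal_natCast]
  have : {x | ∃ k, x ∈ E k} = ⋃ k, E k := by ext; simp
  rw [this]
  refine (measure_iUnion_fintype_le _ _).trans ((Finset.sum_le_sum fun k _ => h k).trans ?_)
  simp

section BadEvents

variable {n m : ℕ}

theorem measurableSet_levels (θ θ' : ℝ)
    (Φ : (Fin n → Finset (Fin m)) → (Fin n → Finset (Fin m)) → Prop) :
    MeasurableSet {u : Fin n → Fin m → ℝ |
      Φ (fun k => upperItems θ (u k)) (fun k => upperItems θ' (u k))} := by
  let _ : MeasurableSpace (Finset (Fin m)) := ⊤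
  have h1 : ∀ θ : ℝ, Measurable fun (u : Fin n → Fin m → ℝ) (k : Fin n) => upperItems θ (u k) :=
    fun θ => measurable_pi_lambda _ fun k => (measurable_upperItems θ).comp (measurable_pi_apply k)
  have h2 : Measurable fun u : Fin n → Fin m → ℝ =>
      ((fun k => upperItems θ (u k)), fun k => upperItems θ' (u k)) := (h1 θ).prodMk (h1 θ')
  have h3 : MeasurableSet {p : (Fin n → Finset (Fin m)) × (Fin n → Finset (Fin m)) | Φ p.1 p.2} :=
    (Set.to_countable _).measurableSet
  exact h2 h3

variable {D : Measure ℝ} [IsProbabilityMeasure D]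

/-- A bound for an event about a single agent `k`, conditionally on the other agents. -/
theorem utilMeasure_agent_le (k : Fin n) {E : Set (Fin n → Fin m → ℝ)} (hE : MeasurableSet E)
    (F : (Fin n → Fin m → ℝ) → Set (Fin m → ℝ))
    (hF : ∀ x y, (∀ i, i ≠ k → x i = y i) → F x = F y) (hEF : ∀ x ∈ E, x k ∈ F x) {c : ℝ≥0∞}
    (hc : ∀ x, Measure.pi (fun _ : Fin m => D) (F x) ≤ c) : utilMeasure n m D E ≤ c := by
  have := pi_measure_le_pow (Measure.pi fun _ : Fin m => D) {k} E hE (fun x _ => F x)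
    (fun x y h => by rw [hF x y fun i hi => h i (by simpa using hi)])
    (fun x hx i hi => by rw [Finset.mem_singleton.1 hi]; exact hEF x hx) c (fun x i _ => hc x)
  simpa [utilMeasure] using this

theorem utilMeasure_le_card_biUnion {θ q : ℝ} (hq : 0 ≤ q)
    (hD : D (Set.Ici θ) = ENNReal.ofReal q) (M : ℕ) :
    utilMeasure n m D {u | M ≤ (Finset.univ.biUnion fun k => upperItems θ (u k)).card} ≤
      ENNReal.ofReal ((Real.exp 1 * ((n * m : ℕ) * q) / M) ^ M) := by
  classical
  have h := measure_card_le_choose (utilMeasure n m D) (Finset.univ : Finset (Fin n × Fin m))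
    (fun p => {u | θ ≤ u p.1 p.2}) (ENNReal.ofReal q) M ?_
  · refine (measure_mono fun u hu => ?_).trans (h.trans ?_)
    · refine le_trans (show M ≤ _ from hu) ?_
      have : (Finset.univ.biUnion fun k => upperItems θ (u k)) ⊆
          (Finset.univ.filter fun p : Fin n × Fin m => u ∈ {u | θ ≤ u p.1 p.2}).image Prod.snd := by
        intro g hg
        obtain ⟨k, -, hk⟩ := Finset.mem_biUnion.1 hg
        refine Finset.mem_image.2 ⟨(k, g), ?_, rfl⟩
        simpa using mem_upperItems.1 hk
      exact (Finset.card_le_card this).trans Finset.card_image_le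
    · have h2 := choose_mul_pow_le_exp (n * m) M hq
      rw [← ENNReal.ofReal_pow hq, ← ENNReal.ofReal_natCast, ← ENNReal.ofReal_mul (by positivity)]
      refine ENNReal.ofReal_le_ofReal ?_
      simpa using h2
  · intro J _ hJ
    have hset : (⋂ p ∈ J, {u : Fin n → Fin m → ℝ | θ ≤ u p.1 p.2}) =
        Set.pi Set.univ fun k : Fin n => Set.pi Set.univ fun g : Fin m =>
          if (k, g) ∈ J then Set.Ici θ else Set.univ := by
      ext u
      simp only [Set.mem_iInter, Set.mem_ofPred_eq, Set.mem_pi, Set.mem_univ, true_implies,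
        Prod.forall]
      refine forall_congr' fun k => forall_congr' fun g => ?_
      by_cases hi : (k, g) ∈ J <;> simp [hi]
    have hD' : ∀ (k : Fin n) (g : Fin m), D (if (k, g) ∈ J then Set.Ici θ else Set.univ) =
        if (k, g) ∈ J then ENNReal.ofReal q else 1 := by
      intro k g; split_ifs <;> simp [hD]
    rw [hset, utilMeasure, Measure.pi_pi]
    simp only [Measure.pi_pi, hD']
    rw [← Fintype.prod_prod_type' fun k g => if (k, g) ∈ J then ENNReal.ofReal q else 1]
    simp [hJ]

theorem utilMeasure_exists_le_card {θ q : ℝ} (hq : 0 ≤ q)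
    (hD : D (Set.Ici θ) = ENNReal.ofReal q) (B : ℕ) :
    utilMeasure n m D {u | ∃ k, B ≤ (upperItems θ (u k)).card} ≤
      ENNReal.ofReal (n * (Real.exp 1 * (m * q) / B) ^ B) := by
  have := measure_exists_le (utilMeasure n m D)
    (fun k : Fin n => {u : Fin n → Fin m → ℝ | B ≤ (upperItems θ (u k)).card})
    (c := (Real.exp 1 * (m * q) / B) ^ B) fun k => ?_
  · simpa using this
  · refine utilMeasure_agent_le k (measurableSet_levels θ θ fun Q _ => B ≤ (Q k).card)
      (fun _ => {x | B ≤ (upperItems θ x).card}) (fun _ _ _ => rfl) (fun x hx => hx) fun _ => ?_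
    simpa using measure_le_card_upperItems_inter D hq hD (Finset.univ : Finset (Fin m)) B

theorem utilMeasure_le_card_inter {θ θ' q : ℝ} (hq : 0 ≤ q)
    (hD : D (Set.Ici θ) = ENNReal.ofReal q) {i j : Fin n} (hij : i ≠ j) (B r : ℕ) :
    utilMeasure n m D {u | (upperItems θ' (u j)).card ≤ B ∧
        r ≤ (upperItems θ (u i) ∩ upperItems θ' (u j)).card} ≤
      ENNReal.ofReal ((Real.exp 1 * (B * q) / r) ^ r) := by
  refine utilMeasure_agent_le i (measurableSet_levels θ θ' fun Q Q' => (Q' j).card ≤ B ∧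
    r ≤ (Q i ∩ Q' j).card) (fun u => {x | (upperItems θ' (u j)).card ≤ B ∧
        r ≤ (upperItems θ x ∩ upperItems θ' (u j)).card}) (fun x y h => by rw [h j hij.symm])
        (fun x hx => hx) fun u => ?_
  by_cases hB : (upperItems θ' (u j)).card ≤ B
  · simp only [hB, true_and]
    refine (measure_le_card_upperItems_inter D hq hD _ r).trans (ENNReal.ofReal_le_ofReal ?_)
    have : ((upperItems θ' (u j)).card : ℝ) ≤ B := by exact_mod_cast hB
    gcongr
  · simp [hB]

theorem utilMeasure_exists_le_card_inter {θ q : ℝ} (hq : 0 ≤ q)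
    (hD : D (Set.Ici θ) = ENNReal.ofReal q) (B r : ℕ) :
    utilMeasure n m D {u | ∃ k k', k ≠ k' ∧ (upperItems θ (u k')).card ≤ B ∧
        r ≤ (upperItems θ (u k) ∩ upperItems θ (u k')).card} ≤
      ENNReal.ofReal (n ^ 2 * (Real.exp 1 * (B * q) / r) ^ r) := by
  have := measure_exists_le (utilMeasure n m D)
    (fun p : Fin n × Fin n => {u : Fin n → Fin m → ℝ | p.1 ≠ p.2 ∧
      (upperItems θ (u p.2)).card ≤ B ∧ r ≤ (upperItems θ (u p.1) ∩ upperItems θ (u p.2)).card})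
    (c := (Real.exp 1 * (B * q) / r) ^ r) fun p => ?_
  · simpa [pow_two] using this
  · by_cases hp : p.1 ≠ p.2
    · simpa [hp] using utilMeasure_le_card_inter hq hD hp B r
    · simp [hp]

theorem utilMeasure_exists_card_sdiff_le {θ₁ θ₂ q : ℝ} (hq : 0 ≤ q) (hq1 : q ≤ 1)
    (hD : D (Set.Ici θ₂) = ENNReal.ofReal q) (M r : ℕ) :
    utilMeasure n m D {u | ∃ k,
        ((Finset.univ.erase k).biUnion fun k' => upperItems θ₁ (u k')).card ≤ M ∧
        (upperItems θ₂ (u k) \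
          (Finset.univ.erase k).biUnion fun k' => upperItems θ₁ (u k')).card ≤ r} ≤
      ENNReal.ofReal (n * (2 ^ r * (1 - q / 2) ^ (m - M))) := by
  have := measure_exists_le (utilMeasure n m D)
    (fun k : Fin n => {u : Fin n → Fin m → ℝ |
        ((Finset.univ.erase k).biUnion fun k' => upperItems θ₁ (u k')).card ≤ M ∧
        (upperItems θ₂ (u k) \
          (Finset.univ.erase k).biUnion fun k' => upperItems θ₁ (u k')).card ≤ r})
    (c := 2 ^ r * (1 - q / 2) ^ (m - M)) fun k => ?_
  · simpa using this
  · refine utilMeasure_agent_le k (measurableSet_levels θ₁ θ₂ fun Q₁ Q₂ =>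
      ((Finset.univ.erase k).biUnion Q₁).card ≤ M ∧
      (Q₂ k \ (Finset.univ.erase k).biUnion Q₁).card ≤ r)
      (fun u => {x | ((Finset.univ.erase k).biUnion fun k' => upperItems θ₁ (u k')).card ≤ M ∧
        (upperItems θ₂ x \
          (Finset.univ.erase k).biUnion fun k' => upperItems θ₁ (u k')).card ≤ r})
      (fun x y h => ?_) (fun x hx => hx) fun u => ?_
    · have : ((Finset.univ.erase k).biUnion fun k' => upperItems θ₁ (x k')) =
          (Finset.univ.erase k).biUnion fun k' => upperItems θ₁ (y k') :=
        Finset.biUnion_congr rfl fun k' hk' => by rw [h k' (Finset.ne_of_mem_erase hk')]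
      rw [this]
    · set Y := (Finset.univ.erase k).biUnion fun k' => upperItems θ₁ (u k')
      by_cases hY : Y.card ≤ M
      · have h1 := measure_card_upperItems_sdiff_le D hq hq1 hD hD Y ∅ r
        simp only [hY, true_and]
        simp only [Finset.notMem_empty, false_imp_iff, implies_true, and_true, Finset.card_empty,
          pow_zero, one_mul, Nat.sub_zero] at h1
        refine h1.trans (ENNReal.ofReal_le_ofReal ?_)
        gcongr 2 ^ r * ?_
        exact pow_le_pow_of_le_one (by linarith) (by linarith) (by omega)
      · simp [hY]

theorem utilMeasure_exists_finset_le {θ₁ θ₂ q₁ q₂ : ℝ} (hq₁ : 0 ≤ q₁) (hq₁1 : q₁ ≤ 1)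
    (hq₂ : 0 ≤ q₂) (hD₁ : D (Set.Ici θ₁) = ENNReal.ofReal q₁)
    (hD₂ : D (Set.Ici θ₂) = ENNReal.ofReal q₂) (B M r p : ℕ) :
    utilMeasure n m D {u | ∃ (k : Fin n) (S : Finset (Fin n)), k ∉ S ∧ S.card = p ∧
        (upperItems θ₂ (u k)).card ≤ B ∧
        ((Finset.univ \ insert k S).biUnion fun l => upperItems θ₁ (u l)).card ≤ M ∧
        ∀ k' ∈ S, (upperItems θ₁ (u k') \
            (Finset.univ \ insert k S).biUnion fun l => upperItems θ₁ (u l)).card ≤ r ∧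
          (upperItems θ₂ (u k') ∩ upperItems θ₂ (u k)).Nonempty} ≤
      ENNReal.ofReal (n * (n * (B * (q₂ * (2 ^ r * (1 - q₁ / 2) ^ (m - M - 1))))) ^ p) := by
  have hpos : 0 ≤ 1 - q₁ / 2 := by linarith
  set c := (B : ℝ) * (q₂ * (2 ^ r * (1 - q₁ / 2) ^ (m - M - 1))) with hc
  have hc0 : 0 ≤ c := by positivity
  have := measure_exists_le (utilMeasure n m D)
    (fun z : Fin n × {S : Finset (Fin n) // S.card = p} => {u : Fin n → Fin m → ℝ | z.1 ∉ z.2.1 ∧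
        (upperItems θ₂ (u z.1)).card ≤ B ∧
        ((Finset.univ \ insert z.1 z.2.1).biUnion fun l => upperItems θ₁ (u l)).card ≤ M ∧
        ∀ k' ∈ z.2.1, (upperItems θ₁ (u k') \
            (Finset.univ \ insert z.1 z.2.1).biUnion fun l => upperItems θ₁ (u l)).card ≤ r ∧
          (upperItems θ₂ (u k') ∩ upperItems θ₂ (u z.1)).Nonempty}) (c := c ^ p) ?_
  · refine (measure_mono ?_).trans (this.trans (ENNReal.ofReal_le_ofReal ?_))
    · rintro u ⟨k, S, hkS, hS, h⟩
      exact ⟨(k, ⟨S, hS⟩), hkS, h⟩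
    · have hchoose : (n.choose p : ℝ) ≤ (n : ℝ) ^ p := by exact_mod_cast Nat.choose_le_pow n p
      rw [Fintype.card_prod, Fintype.card_finset_len, Fintype.card_fin, mul_pow (n : ℝ) c p,
          Nat.cast_mul,
        mul_assoc]
      gcongr
  · rintro ⟨k, S, hS⟩
    simp only
    by_cases hkS : k ∈ S
    · simp [hkS]
    have h1 := pi_measure_le_pow (Measure.pi fun _ : Fin m => D) S
      {u : Fin n → Fin m → ℝ | k ∉ S ∧ (upperItems θ₂ (u k)).card ≤ B ∧
        ((Finset.univ \ insert k S).biUnion fun l => upperItems θ₁ (u l)).card ≤ M ∧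
        ∀ k' ∈ S, (upperItems θ₁ (u k') \
            (Finset.univ \ insert k S).biUnion fun l => upperItems θ₁ (u l)).card ≤ r ∧
          (upperItems θ₂ (u k') ∩ upperItems θ₂ (u k)).Nonempty}
      (measurableSet_levels θ₁ θ₂ fun Q₁ Q₂ => k ∉ S ∧ (Q₂ k).card ≤ B ∧
        ((Finset.univ \ insert k S).biUnion Q₁).card ≤ M ∧ ∀ k' ∈ S,
          (Q₁ k' \ (Finset.univ \ insert k S).biUnion Q₁).card ≤ r ∧ (Q₂ k' ∩ Q₂ k).Nonempty)
      (fun u _ => {x | (upperItems θ₂ (u k)).card ≤ B ∧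
        ((Finset.univ \ insert k S).biUnion fun l => upperItems θ₁ (u l)).card ≤ M ∧
        (upperItems θ₁ x \
            (Finset.univ \ insert k S).biUnion fun l => upperItems θ₁ (u l)).card ≤ r ∧
          (upperItems θ₂ x ∩ upperItems θ₂ (u k)).Nonempty})
      (fun x y h => ?_) (fun u hu k' hk' => ⟨hu.2.1, hu.2.2.1, hu.2.2.2 k' hk'⟩)
      (ENNReal.ofReal c) (fun u k' hk' => ?_)
    · rwa [hS, ← ENNReal.ofReal_pow hc0] at h1
    · have : ((Finset.univ \ insert k S).biUnion fun l => upperItems θ₁ (x l)) =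
          (Finset.univ \ insert k S).biUnion fun l => upperItems θ₁ (y l) :=
        Finset.biUnion_congr rfl fun l hl => by
          rw [h l fun hlS => (Finset.mem_sdiff.1 hl).2 (Finset.mem_insert_of_mem hlS)]
      rw [this, h k hkS]
    · set Y := (Finset.univ \ insert k S).biUnion fun l => upperItems θ₁ (u l)
      set Q := upperItems θ₂ (u k)
      by_cases hQ : Q.card ≤ B
      swap
      · simp [hQ]
      by_cases hY : Y.card ≤ M
      swap
      · simp [hY]
      calc _ ≤ Measure.pi (fun _ : Fin m => D) (⋃ g ∈ Q, {x | (upperItems θ₁ x \ Y).card ≤ r ∧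
              ∀ g' ∈ ({g} : Finset (Fin m)), θ₂ ≤ x g'}) := by
            refine measure_mono fun x hx => ?_
            obtain ⟨g, hg⟩ := hx.2.2.2
            rw [Finset.mem_inter, mem_upperItems] at hg
            simp only [Set.mem_iUnion]
            exact ⟨g, hg.2, hx.2.2.1, by simpa using hg.1⟩
        _ ≤ ∑ g ∈ Q, _ := measure_biUnion_finset_le _ _
        _ ≤ ∑ g ∈ Q, ENNReal.ofReal (q₂ * (2 ^ r * (1 - q₁ / 2) ^ (m - M - 1))) := by
            refine Finset.sum_le_sum fun g _ => ?_
            refine (measure_card_upperItems_sdiff_le D hq₁ hq₁1 hD₁ hD₂ Y {g} r).trans ?_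
            rw [Finset.card_singleton, pow_one, ← ENNReal.ofReal_mul hq₂]
            refine ENNReal.ofReal_le_ofReal ?_
            gcongr q₂ * (2 ^ r * ?_)
            exact pow_le_pow_of_le_one hpos (by linarith) (by omega)
        _ = ENNReal.ofReal (Q.card * (q₂ * (2 ^ r * (1 - q₁ / 2) ^ (m - M - 1)))) := by
            rw [Finset.sum_const, nsmul_eq_mul, ENNReal.ofReal_mul (by positivity : (0 : ℝ) ≤ Q.card),
              ENNReal.ofReal_natCast]
        _ ≤ _ := by
            refine ENNReal.ofReal_le_ofReal ?_
            rw [hc]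
            gcongr

end BadEvents

/-- Agents can be given thresholds, all at least `θ`, such that each agent has more than `R` items
above her own threshold that are below the thresholds of all the other agents. -/
def Separated {n m : ℕ} (θ : ℝ) (R : ℕ) (u : Fin n → Fin m → ℝ) : Prop :=
  ∃ τ : Fin n → ℝ, (∀ k, θ ≤ τ k) ∧ ∀ k, R < (upperItems (τ k) (u k) \
    (Finset.univ.erase k).biUnion fun k' => upperItems (τ k') (u k')).card

section Separated

variable {n m : ℕ} {D : Measure ℝ} [IsProbabilityMeasure D]

theorem utilMeasure_not_separated_le {θ₁ θ₂ q₁ q₂ : ℝ} (hθ : θ₂ ≤ θ₁) (hq₁ : 0 ≤ q₁)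
    (hq₁1 : q₁ ≤ 1) (hq₂ : 0 ≤ q₂) (hq₂1 : q₂ ≤ 1) (hD₁ : D (Set.Ici θ₁) = ENNReal.ofReal q₁)
    (hD₂ : D (Set.Ici θ₂) = ENNReal.ofReal q₂) (B M R p : ℕ) (hp : 5 * p ≤ R) {δ : ℝ} (hδ : 0 ≤ δ)
    (h₁ : (Real.exp 1 * ((n * m : ℕ) * q₁) / M) ^ M ≤ δ)
    (h₂ : n * (Real.exp 1 * (m * q₂) / B) ^ B ≤ δ)
    (h₃ : n ^ 2 * (Real.exp 1 * (B * q₂) / (6 : ℕ)) ^ 6 ≤ δ)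
    (h₄ : n * (2 ^ (2 * R) * (1 - q₂ / 2) ^ (m - M)) ≤ δ)
    (h₅ : n * (n * (B * (q₂ * (2 ^ (3 * R) * (1 - q₁ / 2) ^ (m - M - 1))))) ^ p ≤ δ) :
    utilMeasure n m D {u | ¬ (Separated θ₂ R u ∧ ∀ k, (upperItems θ₂ (u k)).card ≤ B)} ≤
      ENNReal.ofReal (5 * δ) := by
  have hcover : {u : Fin n → Fin m → ℝ |
      ¬ (Separated θ₂ R u ∧ ∀ k, (upperItems θ₂ (u k)).card ≤ B)} ⊆
      {u | M ≤ (Finset.univ.biUnion fun k => upperItems θ₁ (u k)).card} ∪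
      ({u | ∃ k, B ≤ (upperItems θ₂ (u k)).card} ∪
      ({u | ∃ k k', k ≠ k' ∧ (upperItems θ₂ (u k')).card ≤ B ∧
        6 ≤ (upperItems θ₂ (u k) ∩ upperItems θ₂ (u k')).card} ∪
      ({u | ∃ k, ((Finset.univ.erase k).biUnion fun k' => upperItems θ₁ (u k')).card ≤ M ∧
        (upperItems θ₂ (u k) \
          (Finset.univ.erase k).biUnion fun k' => upperItems θ₁ (u k')).card ≤ 2 * R} ∪
      {u | ∃ (k : Fin n) (S : Finset (Fin n)), k ∉ S ∧ S.card = p ∧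
        (upperItems θ₂ (u k)).card ≤ B ∧
        ((Finset.univ \ insert k S).biUnion fun l => upperItems θ₁ (u l)).card ≤ M ∧
        ∀ k' ∈ S, (upperItems θ₁ (u k') \
            (Finset.univ \ insert k S).biUnion fun l => upperItems θ₁ (u l)).card ≤ 3 * R ∧
          (upperItems θ₂ (u k') ∩ upperItems θ₂ (u k)).Nonempty}))) := by
    intro u hu
    by_contra hcon
    simp only [Set.mem_union, not_or, Set.mem_ofPred_eq] at hcon
    obtain ⟨hM, hB, hinter, hlarge, hlocal⟩ := hcon
    push Not at hM hB
    have hMY : ∀ S : Finset (Fin n), (S.biUnion fun l => upperItems θ₁ (u l)).card ≤ M := fun S =>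
      (Finset.card_le_card (Finset.biUnion_subset_biUnion_of_subset_left _ (Finset.subset_univ S))).trans
        hM.le
    refine hu ⟨?_, fun k => (hB k).le⟩
    have hpair : ∀ k k', k ≠ k' → (upperItems θ₂ (u k) ∩ upperItems θ₂ (u k')).card ≤ 5 := by
      intro k k' hkk'
      by_contra h
      exact hinter ⟨k, k', hkk', (hB k').le, by omega⟩
    have hlarge' : ∀ k, 2 * R < (upperItems θ₂ (u k) \
        (Finset.univ.erase k).biUnion fun k' => upperItems θ₁ (u k')).card := by
      intro k
      by_contra h
      exact hlarge ⟨k, hMY _, not_lt.1 h⟩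
    obtain ⟨C, hC⟩ := exists_level_assignment (fun k => upperItems θ₁ (u k))
      (fun k => upperItems θ₂ (u k)) R p hp (fun k => upperItems_anti hθ _) hpair hlarge'
      fun k S hkS hS => by
        by_contra h
        push Not at h
        exact hlocal ⟨k, S, hkS, hS, (hB k).le, hMY _, fun k' hk' => h k' hk'⟩
    refine ⟨fun k => if k ∈ C then θ₂ else θ₁, fun k => ?_, fun k => ?_⟩
    · by_cases hk : k ∈ C
      · simp [hk]
      · simpa [hk] using hθ
    · have : ∀ k, upperItems (if k ∈ C then θ₂ else θ₁) (u k) =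
          if k ∈ C then upperItems θ₂ (u k) else upperItems θ₁ (u k) := fun k => by
        split_ifs <;> rfl
      simp only [this]
      exact hC k
  have hle : ∀ {E : Set (Fin n → Fin m → ℝ)} {x : ℝ}, utilMeasure n m D E ≤ ENNReal.ofReal x →
      x ≤ δ → utilMeasure n m D E ≤ ENNReal.ofReal δ := fun h hx =>
    h.trans (ENNReal.ofReal_le_ofReal hx)
  have h5 : ENNReal.ofReal (5 * δ) = ENNReal.ofReal δ + (ENNReal.ofReal δ + (ENNReal.ofReal δ +
      (ENNReal.ofReal δ + ENNReal.ofReal δ))) := by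
    rw [← ENNReal.ofReal_add hδ hδ, ← ENNReal.ofReal_add hδ (by positivity),
      ← ENNReal.ofReal_add hδ (by positivity), ← ENNReal.ofReal_add hδ (by positivity)]
    congr 1
    ring
  rw [h5]
  refine (measure_mono hcover).trans ?_
  refine (measure_union_le _ _).trans (add_le_add
    (hle (utilMeasure_le_card_biUnion hq₁ hD₁ M) h₁) ?_)
  refine (measure_union_le _ _).trans (add_le_add
    (hle (utilMeasure_exists_le_card hq₂ hD₂ B) h₂) ?_)
  refine (measure_union_le _ _).trans (add_le_add
    (hle (utilMeasure_exists_le_card_inter hq₂ hD₂ B 6) h₃) ?_)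
  exact (measure_union_le _ _).trans (add_le_add
    (hle (utilMeasure_exists_card_sdiff_le hq₂ hq₂1 hD₂ M (2 * R)) h₄)
    (hle (utilMeasure_exists_finset_le hq₁ hq₁1 hq₂ hD₁ hD₂ B M (3 * R) p) h₅))

theorem ofReal_one_sub_le_measure {Ω : Type*} [MeasurableSpace Ω] (μ : Measure Ω)
    [IsProbabilityMeasure μ] {S : Set Ω} {x : ℝ} (hx : 0 ≤ x) (h : μ Sᶜ ≤ ENNReal.ofReal x) :
    ENNReal.ofReal (1 - x) ≤ μ S := by
  rw [ENNReal.ofReal_sub _ hx, ENNReal.ofReal_one, tsub_le_iff_right]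
  calc (1 : ℝ≥0∞) = μ (S ∪ Sᶜ) := by simp
    _ ≤ μ S + μ Sᶜ := measure_union_le _ _
    _ ≤ _ := by gcongr

instance isProbabilityMeasure_utilMeasure : IsProbabilityMeasure (utilMeasure n m D) := by
  unfold utilMeasure
  infer_instance

end Separated

section Quantile

variable {α β : ℝ} {D : Measure ℝ}

theorem PDFBounded.measure_le (h : PDFBounded α β D) {s : Set ℝ} (hs : MeasurableSet s) :
    D s ≤ ENNReal.ofReal β * volume (s ∩ Set.Icc 0 1) := by
  obtain ⟨f, rfl, hf⟩ := h
  rw [withDensity_apply _ hs, Measure.restrict_restrict hs]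
  calc _ ≤ ∫⁻ _ in s ∩ Set.Icc (0 : ℝ) 1, ENNReal.ofReal β :=
        setLIntegral_mono' (hs.inter measurableSet_Icc) fun x hx => (hf x hx.2).2
    _ = _ := by rw [setLIntegral_const]

theorem PDFBounded.le_measure (h : PDFBounded α β D) {s : Set ℝ} (hs : MeasurableSet s) :
    ENNReal.ofReal α * volume (s ∩ Set.Icc 0 1) ≤ D s := by
  obtain ⟨f, rfl, hf⟩ := h
  rw [withDensity_apply _ hs, Measure.restrict_restrict hs]
  calc _ = ∫⁻ _ in s ∩ Set.Icc (0 : ℝ) 1, ENNReal.ofReal α := by rw [setLIntegral_const]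
    _ ≤ _ := setLIntegral_mono' (hs.inter measurableSet_Icc) fun x hx => (hf x hx.2).1

theorem PDFBounded.measure_Ico_le (h : PDFBounded α β D) (hβ : 0 ≤ β) (a b : ℝ) :
    D (Set.Ico a b) ≤ ENNReal.ofReal (β * (b - a)) := by
  refine (h.measure_le measurableSet_Ico).trans ?_
  rw [ENNReal.ofReal_mul hβ, ← Real.volume_Ico]
  gcongr
  exact Set.inter_subset_left

theorem PDFBounded.measure_Ici_le (h : PDFBounded α β D) (hβ : 0 ≤ β) (a : ℝ) :
    D (Set.Ici a) ≤ ENNReal.ofReal (β * (1 - a)) := by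
  refine (h.measure_le measurableSet_Ici).trans ?_
  rw [ENNReal.ofReal_mul hβ, ← Real.volume_Icc]
  gcongr
  exact fun x hx => ⟨hx.1, hx.2.2⟩

theorem PDFBounded.le_measure_Ici (h : PDFBounded α β D) (hα : 0 ≤ α) {a : ℝ} (ha : 0 ≤ a) :
    ENNReal.ofReal (α * (1 - a)) ≤ D (Set.Ici a) := by
  refine le_trans ?_ (h.le_measure measurableSet_Ici)
  rw [ENNReal.ofReal_mul hα, ← Real.volume_Icc]
  gcongr
  exact fun x hx => ⟨hx.1, ha.trans hx.1, hx.2⟩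

theorem PDFBounded.le (h : PDFBounded α β D) (hβ : 0 ≤ β) : α ≤ β := by
  obtain ⟨f, -, hf⟩ := h
  have := hf 0 (by simp)
  exact (ENNReal.ofReal_le_ofReal_iff hβ).1 (this.1.trans this.2)

theorem PDFBounded.exists_quantile [IsProbabilityMeasure D] (h : PDFBounded α β D) (hβ : 0 ≤ β)
    {q : ℝ} (hq : 0 ≤ q) (hq1 : q ≤ 1) :
    ∃ θ ∈ Set.Icc (0 : ℝ) 1, D (Set.Ici θ) = ENNReal.ofReal q := by
  have hanti : ∀ a b, a ≤ b → D.real (Set.Ici b) ≤ D.real (Set.Ici a) := fun a b hab =>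
    measureReal_mono (Set.Ici_subset_Ici.2 hab)
  have hlip : ∀ a b, a ≤ b → D.real (Set.Ici a) ≤ D.real (Set.Ici b) + β * (b - a) := by
    intro a b hab
    rw [← Set.Ico_union_Ici_eq_Ici hab]
    refine (measureReal_union_le _ _).trans ?_
    have : D.real (Set.Ico a b) ≤ β * (b - a) :=
      ENNReal.toReal_le_of_le_ofReal (mul_nonneg hβ (by linarith)) (h.measure_Ico_le hβ a b)
    linarith
  have hcont : Continuous fun x => D.real (Set.Ici x) := by
    have : LipschitzWith β.toNNReal fun x => D.real (Set.Ici x) := by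
      refine LipschitzWith.of_dist_le_mul fun a b => ?_
      rw [Real.dist_eq, Real.dist_eq, Real.coe_toNNReal β hβ]
      rcases le_total a b with hab | hab
      · rw [abs_sub_comm a b, abs_of_nonneg (sub_nonneg.2 (hanti a b hab)),
          abs_of_nonneg (sub_nonneg.2 hab)]
        linarith [hlip a b hab]
      · rw [abs_sub_comm, abs_of_nonneg (sub_nonneg.2 (hanti b a hab)),
          abs_of_nonneg (sub_nonneg.2 hab)]
        linarith [hlip b a hab]
    exact this.continuous
  have h1 : D.real (Set.Ici 1) ≤ 0 := by
    have := h.measure_Ici_le hβ 1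
    simp only [sub_self, mul_zero] at this
    exact ENNReal.toReal_le_of_le_ofReal le_rfl this
  have h0 : 1 ≤ D.real (Set.Ici 0) := by
    have hneg : D (Set.Iio 0) = 0 := by
      have := h.measure_le (measurableSet_Iio (a := (0 : ℝ)))
      have hempty : Set.Iio (0 : ℝ) ∩ Set.Icc 0 1 = ∅ := by
        ext x
        simp only [Set.mem_inter_iff, Set.mem_Iio, Set.mem_Icc, Set.mem_empty_iff_false, iff_false]
        intro hx
        linarith [hx.1, hx.2.1]
      simpa [hempty] using this
    have : D (Set.Ici 0) = 1 := by
      rw [← Set.compl_Iio, prob_compl_eq_one_sub measurableSet_Iio, hneg, tsub_zero]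
    simp [Measure.real, this]
  obtain ⟨θ, hθ, hθq⟩ := intermediate_value_Icc' (zero_le_one' ℝ) hcont.continuousOn
    (show q ∈ Set.Icc (D.real (Set.Ici 1)) (D.real (Set.Ici 0)) from ⟨by linarith, by linarith⟩)
  refine ⟨θ, hθ, ?_⟩
  rw [← hθq]
  exact (ENNReal.ofReal_toReal (measure_ne_top _ _)).symm

end Quantile

/-- The size conditions on `x` that make all the tail bounds effective. -/
structure IsLarge (α β κ C x : ℝ) : Prop where
  one_le_loglog : 1 ≤ Real.log (Real.log x)
  le_ratio : 100 * C + 100 ≤ Real.log x / Real.log (Real.log x)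
  le_loglog : 204 * κ ≤ Real.log (Real.log x)
  log_pow_le : 10 ^ 20 * Real.log x ^ 12 ≤ x
  log_sq_le : 320 * Real.log x ^ 2 ≤ α * x
  log_le_sqrt : 5 * 10 ^ 5 * κ * Real.log x ≤ √x
  loglog_sq_le : 4 * Real.log (Real.log x) ^ 2 ≤ Real.log x
  loglog_sq_le_exp : β * Real.log (Real.log x) ^ 2 ≤ Real.exp (Real.log (Real.log x) / 2)

theorem eventually_mul_pow_le_exp (A : ℝ) (k : ℕ) :
    ∀ᶠ x : ℝ in Filter.atTop, A * x ^ k ≤ Real.exp x := by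
  filter_upwards [(Real.tendsto_exp_div_pow_atTop k).eventually_ge_atTop A,
    Filter.eventually_gt_atTop 0] with x hx hx0
  rwa [le_div_iff₀ (by positivity)] at hx

theorem eventually_isLarge {α : ℝ} (hα : 0 < α) (β κ C : ℝ) :
    ∀ᶠ x : ℝ in Filter.atTop, IsLarge α β κ C x := by
  have hl := Real.tendsto_log_atTop
  have hll := hl.comp hl
  have hhalf : Filter.Tendsto (fun x : ℝ => x / 2) Filter.atTop Filter.atTop :=
    Filter.tendsto_id.atTop_div_const (by norm_num)
  filter_upwards [hll.eventually_ge_atTop 1, hll.eventually_ge_atTop (204 * κ),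
    hll.eventually (eventually_mul_pow_le_exp (100 * C + 100) 1),
    hl.eventually (eventually_mul_pow_le_exp (10 ^ 20) 12),
    hl.eventually (eventually_mul_pow_le_exp (320 / α) 2),
    (hhalf.comp hl).eventually (eventually_mul_pow_le_exp (10 ^ 6 * κ) 1),
    hll.eventually (eventually_mul_pow_le_exp 4 2),
    (hhalf.comp hll).eventually (eventually_mul_pow_le_exp (4 * β) 2),
    Filter.eventually_gt_atTop 0, hl.eventually_gt_atTop 0] with x h1 h2 h3 h4 h5 h6 h7 h8 hx hlx
  simp only [Function.comp_apply, Real.exp_log hx, Real.exp_log hlx, pow_one] at *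
  have hsqrt : Real.exp (Real.log x / 2) = √x := by
    rw [← Real.log_sqrt hx.le, Real.exp_log (Real.sqrt_pos.2 hx)]
  refine ⟨h1, ?_, h2, h4, ?_, ?_, h7, ?_⟩
  · rwa [le_div_iff₀ (by linarith)]
  · rw [div_mul_eq_mul_div, div_le_iff₀ hα] at h5
    linarith
  · rw [hsqrt] at h6
    linarith
  · linarith

theorem pow_le_exp_neg {a c : ℝ} (ha : 0 ≤ a) (h : a ≤ Real.exp (-c)) (N : ℕ) :
    a ^ N ≤ Real.exp (-(c * N)) := by
  calc a ^ N ≤ Real.exp (-c) ^ N := by gcongr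
    _ = _ := by rw [← Real.exp_nat_mul]; congr 1; ring

theorem two_pow_le_exp (N : ℕ) : (2 : ℝ) ^ N ≤ Real.exp N := by
  have h : (2 : ℝ) ≤ Real.exp 1 := by linarith [Real.add_one_le_exp 1]
  calc (2 : ℝ) ^ N ≤ Real.exp 1 ^ N := by gcongr
    _ = _ := by rw [← Real.exp_nat_mul, mul_one]

section Numerics

variable {α β κ C : ℝ} {n m R : ℕ}

theorem IsLarge.log_ge {x : ℝ} (h : IsLarge α β κ C x) (hC : 1 ≤ C) : 200 ≤ Real.log x := by
  have h1 := h.one_le_loglog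
  have h2 := h.le_ratio
  rw [le_div_iff₀ (by linarith)] at h2
  nlinarith

theorem IsLarge.ge {x : ℝ} (h : IsLarge α β κ C x) (hC : 1 ≤ C) : 10 ^ 20 ≤ x := by
  have h1 := one_le_pow₀ (a := Real.log x) (n := 12) (by linarith [h.log_ge hC])
  linarith [h.log_pow_le]

theorem IsLarge.mul_log_le {x : ℝ} (h : IsLarge α β κ C x) (hC : 1 ≤ C) :
    10 ^ 20 * Real.log x ≤ x := by
  have h1 := le_self_pow₀ (a := Real.log x) (n := 12) (by linarith [h.log_ge hC]) (by norm_num)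
  linarith [h.log_pow_le]

theorem exp_one_le_three : Real.exp 1 ≤ 3 := by linarith [Real.exp_one_lt_d9]

theorem union_tail_le (h : IsLarge α β κ C m) (hC : 1 ≤ C) (hnR : 1000 * (n * R : ℝ) ≤ m) :
    (Real.exp 1 * ((n * m : ℕ) * (20 * R / m)) / (m / 4 : ℕ)) ^ (m / 4) ≤
      Real.exp (-(3 * Real.log m)) := by
  have hm := h.ge hC
  have hm0 : (m : ℝ) ≠ 0 := by linarith
  have hM : (m : ℝ) / 5 ≤ (m / 4 : ℕ) := by
    have h1 : m < 4 * (m / 4) + 4 := by omega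
    have h2 : (m : ℝ) < 4 * (m / 4 : ℕ) + 4 := by exact_mod_cast h1
    linarith
  have he := exp_one_le_three
  refine (pow_le_exp_neg (by positivity) (c := 1) ?_ _).trans ?_
  · rw [Real.exp_neg, div_le_iff₀ (by linarith), inv_mul_eq_div, le_div_iff₀ (Real.exp_pos 1)]
    have h3 : ((n * m : ℕ) * (20 * R / m) : ℝ) = 20 * (n * R) := by
      push_cast
      field_simp
    rw [h3]
    have h4 : Real.exp 1 * Real.exp 1 ≤ 9 := by nlinarith [Real.exp_pos 1]
    calc Real.exp 1 * (20 * (n * R)) * Real.exp 1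
        = Real.exp 1 * Real.exp 1 * (20 * (n * R)) := by ring
      _ ≤ 9 * (20 * (n * R)) := by gcongr
      _ ≤ (m / 4 : ℕ) := by linarith
  · rw [Real.exp_le_exp]
    have := h.mul_log_le hC
    have := h.log_ge hC
    linarith

theorem card_tail_le (h : IsLarge α β κ C m) (hC : 1 ≤ C) (hnm : n ≤ m) {B : ℕ}
    (hB : 128 * Real.log m ≤ B) :
    n * (Real.exp 1 * (m * (16 * Real.log m / m)) / B) ^ B ≤ Real.exp (-(3 * Real.log m)) := by
  have hm := h.ge hC
  have hm0 : (m : ℝ) ≠ 0 := by linarith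
  have hl := h.log_ge hC
  have he := exp_one_le_three
  have hn : (n : ℝ) ≤ Real.exp (Real.log m) := by
    rw [Real.exp_log (by linarith)]
    exact_mod_cast hnm
  calc n * (Real.exp 1 * (m * (16 * Real.log m / m)) / B) ^ B
      ≤ Real.exp (Real.log m) * Real.exp (-(1 / 2 * B)) := by
        gcongr
        refine pow_le_exp_neg (by positivity) ?_ _
        rw [mul_div_cancel₀ _ hm0, div_le_iff₀ (by linarith)]
        have : 1 / 2 ≤ Real.exp (-(1 / 2)) := by linarith [Real.add_one_le_exp (-(1 / 2 : ℝ))]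
        nlinarith
    _ ≤ _ := by
        rw [← Real.exp_add, Real.exp_le_exp]
        linarith

theorem pair_tail_le (h : IsLarge α β κ C m) (hC : 1 ≤ C) (hnm : n ≤ m) {B : ℕ}
    (hB : B ≤ 129 * Real.log m) :
    n ^ 2 * (Real.exp 1 * (B * (16 * Real.log m / m)) / (6 : ℕ)) ^ 6 ≤
      Real.exp (-(3 * Real.log m)) := by
  have hm := h.ge hC
  have hm0 : (0 : ℝ) < m := by linarith
  have hl := h.log_ge hC
  have he := exp_one_le_three
  have hn : (n : ℝ) ≤ m := by exact_mod_cast hnm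
  have h3 : Real.exp (-(3 * Real.log m)) = 1 / (m : ℝ) ^ 3 := by
    rw [Real.exp_neg, mul_comm, Real.exp_mul, Real.exp_log hm0, one_div]
    norm_cast
  rw [h3, le_div_iff₀ (by positivity)]
  calc n ^ 2 * (Real.exp 1 * (B * (16 * Real.log m / m)) / (6 : ℕ)) ^ 6 * (m : ℝ) ^ 3
      ≤ m ^ 2 * (3 * (129 * Real.log m * (16 * Real.log m / m)) / (6 : ℕ)) ^ 6 * (m : ℝ) ^ 3 := by
        gcongr
    _ = 1032 ^ 6 * Real.log m ^ 12 / m := by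
        field_simp
        norm_num
    _ ≤ 1 := by
        rw [div_le_one hm0]
        have := h.log_pow_le
        have h12 : 0 ≤ Real.log m ^ 12 := by positivity
        linarith

theorem one_sub_half_pow_le {q : ℝ} (hq1 : q ≤ 1) {N : ℕ} {c : ℝ} (hc : 2 * c ≤ q * N) :
    (1 - q / 2) ^ N ≤ Real.exp (-c) := by
  refine (pow_le_exp_neg (by linarith) (Real.one_sub_le_exp_neg (q / 2)) N).trans ?_
  rw [Real.exp_le_exp]
  linarith

theorem large_tail_le (h : IsLarge α β κ C m) (hC : 1 ≤ C) (hnm : n ≤ m)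
    (hR : 2 * R ≤ Real.log m) :
    n * (2 ^ (2 * R) * (1 - 16 * Real.log m / m / 2) ^ (m - m / 4)) ≤
      Real.exp (-(3 * Real.log m)) := by
  have hm := h.ge hC
  have hm0 : (0 : ℝ) < m := by linarith
  have hl := h.log_ge hC
  have hml := h.mul_log_le hC
  have hn : (n : ℝ) ≤ Real.exp (Real.log m) := by
    rw [Real.exp_log hm0]
    exact_mod_cast hnm
  have hM : 3 / 4 * (m : ℝ) ≤ (m - m / 4 : ℕ) := by
    have h1 : 3 * m ≤ 4 * (m - m / 4) := by omega
    have h2 : 3 * (m : ℝ) ≤ 4 * (m - m / 4 : ℕ) := by exact_mod_cast h1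
    linarith
  calc _ ≤ Real.exp (Real.log m) * (Real.exp (2 * R : ℕ) * Real.exp (-(6 * Real.log m))) := by
        have hq1 : 16 * Real.log m / m ≤ 1 := by rw [div_le_one hm0]; linarith
        have hpos : 0 ≤ 1 - 16 * Real.log m / m / 2 := by linarith
        gcongr
        · exact two_pow_le_exp _
        · refine one_sub_half_pow_le hq1 ?_
          calc 2 * (6 * Real.log m) = 16 * Real.log m / m * (3 / 4 * m) := by field_simp; norm_num
            _ ≤ _ := by gcongr
    _ ≤ _ := by
        rw [← Real.exp_add, ← Real.exp_add, Real.exp_le_exp]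
        push_cast
        linarith

theorem local_tail_le (h : IsLarge α β κ C m) (hC : 1 ≤ C) (hnm : n ≤ m)
    (hR : 2 * R ≤ Real.log m) (hR' : 101 * (Real.log m / Real.log (Real.log m)) ≤ R) {B : ℕ}
    (hB : B ≤ 129 * Real.log m) :
    n * (n * (B * (16 * Real.log m / m *
      (2 ^ (3 * R) * (1 - 20 * R / m / 2) ^ (m - m / 4 - 1))))) ^ (R / 5) ≤
      Real.exp (-(3 * Real.log m)) := by
  have hm := h.ge hC
  have hm0 : (0 : ℝ) < m := by linarith
  have hl := h.log_ge hC
  have hl0 : 0 < Real.log m := by linarith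
  have hml := h.mul_log_le hC
  have hy := h.one_le_loglog
  have hn' : (n : ℝ) ≤ m := by exact_mod_cast hnm
  have hn : (n : ℝ) ≤ Real.exp (Real.log m) := by rwa [Real.exp_log hm0]
  have hL := h.le_ratio
  set L := Real.log m / Real.log (Real.log m) with hLdef
  set y := Real.log (Real.log m) with hydef
  have hLy : L * y = Real.log m := div_mul_cancel₀ _ (by linarith)
  have hyL : 4 * y ≤ L := by
    rw [hLdef, le_div_iff₀ (by linarith)]
    linarith [h.loglog_sq_le]
  have hM : 3 / 4 * (m : ℝ) - 1 ≤ (m - m / 4 - 1 : ℕ) := by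
    have h1 : 3 * m ≤ 4 * (m - m / 4 - 1) + 4 := by omega
    have h2 : 3 * (m : ℝ) ≤ 4 * (m - m / 4 - 1 : ℕ) + 4 := by exact_mod_cast h1
    linarith
  have hp : (R : ℝ) / 6 ≤ (R / 5 : ℕ) := by
    have h1 : R < 5 * (R / 5) + 5 := by omega
    have h2 : (R : ℝ) < 5 * (R / 5 : ℕ) + 5 := by exact_mod_cast h1
    linarith
  have hq1 : 20 * R / m ≤ (1 : ℝ) := by rw [div_le_one hm0]; linarith
  have hpos : 0 ≤ 1 - 20 * (R : ℝ) / m / 2 := by linarith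
  have hpow : (1 - 20 * (R : ℝ) / m / 2) ^ (m - m / 4 - 1) ≤ Real.exp (-(7 * R)) := by
    refine one_sub_half_pow_le hq1 ?_
    calc 2 * (7 * (R : ℝ)) = 20 * R / m * (7 / 10 * m) := by field_simp; ring
      _ ≤ 20 * R / m * (3 / 4 * (m : ℝ) - 1) := by
          gcongr
          linarith
      _ ≤ _ := by gcongr
  have hlog4 : 2064 * Real.log m ^ 2 ≤ Real.exp R := by
    calc 2064 * Real.log m ^ 2 ≤ Real.log m ^ 2 * Real.log m ^ 2 := by
          gcongr
          nlinarith
      _ = Real.exp (4 * y) := by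
          rw [mul_comm 4 y, Real.exp_mul, hydef, Real.exp_log hl0]
          norm_cast
          ring
      _ ≤ _ := by
          rw [Real.exp_le_exp]
          linarith
  have hbase : n * (B * (16 * Real.log m / m *
      (2 ^ (3 * R) * (1 - 20 * R / m / 2) ^ (m - m / 4 - 1)))) ≤ Real.exp (-(3 * R)) := by
    calc _ ≤ m * (129 * Real.log m * (16 * Real.log m / m *
          (Real.exp (3 * R : ℕ) * Real.exp (-(7 * R))))) := by
          gcongr
          exact two_pow_le_exp _
      _ = 2064 * Real.log m ^ 2 * Real.exp (-(4 * R)) := by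
          rw [← Real.exp_add, show ((3 * R : ℕ) : ℝ) + -(7 * R) = -(4 * R) by push_cast; ring]
          field_simp
          ring
      _ ≤ Real.exp R * Real.exp (-(4 * R)) := by gcongr
      _ = _ := by rw [← Real.exp_add]; congr 1; ring
  calc _ ≤ Real.exp (Real.log m) * Real.exp (-(3 * R * (R / 5 : ℕ))) := by
        gcongr
        exact pow_le_exp_neg (by positivity) hbase _
    _ ≤ _ := by
        rw [← Real.exp_add, Real.exp_le_exp]
        have h1 : 101 * L * (101 * L) ≤ R * (R : ℝ) := by gcongr
        have h2 : L * y ≤ L * L := by gcongr; linarith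
        have h3 : 3 * R * (R / 6 : ℝ) ≤ 3 * R * (R / 5 : ℕ) := by gcongr
        nlinarith

theorem level_tail_le (h : IsLarge α β κ C m) (hC : 1 ≤ C) (hβ : 0 ≤ β) {B r : ℕ}
    (hB : B ≤ 129 * Real.log m) {q : ℝ} (hq0 : 0 ≤ q)
    (hq : q ≤ β * (1 / (10 * (Real.log m / Real.log (Real.log m)))))
    (hr : 40 * (Real.log m / Real.log (Real.log m)) ≤ r) :
    (Real.exp 1 * (B * q) / r) ^ r ≤ Real.exp (-(3 * Real.log m)) := by
  have hl := h.log_ge hC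
  have hl0 : 0 < Real.log m := by linarith
  have hy := h.one_le_loglog
  have hL := h.le_ratio
  have hexp := h.loglog_sq_le_exp
  have he := exp_one_le_three
  set L := Real.log m / Real.log (Real.log m) with hLdef
  set y := Real.log (Real.log m) with hydef
  have hLy : L * y = Real.log m := div_mul_cancel₀ _ (by linarith)
  have hL0 : 0 < L := by linarith
  refine (pow_le_exp_neg (by positivity) (c := y / 2) ?_ _).trans ?_
  · calc Real.exp 1 * (B * q) / r ≤ 3 * (129 * Real.log m * (β * (1 / (10 * L)))) / (40 * L) := by
          gcongr
      _ = 387 / 400 * (β * y ^ 2 / Real.log m) := by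
          rw [← hLy]
          field_simp
          ring
      _ ≤ β * y ^ 2 / Real.log m := by
          have : 0 ≤ β * y ^ 2 / Real.log m := by positivity
          linarith
      _ ≤ Real.exp (y / 2) / Real.exp y := by
          rw [hydef, Real.exp_log hl0]
          gcongr
      _ = _ := by rw [← Real.exp_sub]; congr 1; ring
  · rw [Real.exp_le_exp]
    nlinarith

end Numerics

section Assembly

variable {α β κ C : ℝ} {n m : ℕ} {D : Measure ℝ}

theorem IsLarge.exists_threshold [IsProbabilityMeasure D] (h : IsLarge α β κ C m) (hC : 1 ≤ C)
    (hα : 0 < α) (hβ : 0 ≤ β) (hD : PDFBounded α β D) (hnm : n ≤ m) {R B : ℕ}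
    (hnR : 1000 * (n * R : ℝ) ≤ m) (hR : 2 * R ≤ Real.log m)
    (hR' : 101 * (Real.log m / Real.log (Real.log m)) ≤ R) (hB : 128 * Real.log m ≤ B)
    (hB' : B ≤ 129 * Real.log m) :
    ∃ θ : ℝ, 1 - 1 / (10 * (Real.log m / Real.log (Real.log m))) / 2 ≤ θ ∧
      utilMeasure n m D {u | ¬ (Separated θ R u ∧ ∀ k, (upperItems θ (u k)).card ≤ B)} ≤
        ENNReal.ofReal (5 * Real.exp (-(3 * Real.log m))) := by
  have hm := h.ge hC
  have hm0 : (0 : ℝ) < m := by linarith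
  have hl := h.log_ge hC
  have hml := h.mul_log_le hC
  have hy := h.one_le_loglog
  have hL := h.le_ratio
  have hα' := h.log_sq_le
  have hq₁ : 0 ≤ 20 * (R : ℝ) / m := by positivity
  have hq₂ : 0 ≤ 16 * Real.log m / m := by positivity
  have hq₁₂ : 20 * (R : ℝ) / m < 16 * Real.log m / m :=
    div_lt_div_of_pos_right (by linarith) hm0
  have hq₂1 : 16 * Real.log m / m ≤ 1 := by rw [div_le_one hm0]; linarith
  obtain ⟨θ₁, -, hθ₁⟩ := hD.exists_quantile hβ hq₁ (hq₁₂.le.trans hq₂1)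
  obtain ⟨θ₂, hθ₂, hDθ₂⟩ := hD.exists_quantile hβ hq₂ hq₂1
  have hθ : θ₂ ≤ θ₁ := by
    by_contra hcon
    have := measure_mono (μ := D) (Set.Ici_subset_Ici.2 (not_le.1 hcon).le)
    rw [hθ₁, hDθ₂, ENNReal.ofReal_le_ofReal_iff hq₁] at this
    linarith
  refine ⟨θ₂, ?_, ?_⟩
  · have h1 := hD.le_measure_Ici hα.le hθ₂.1
    rw [hDθ₂, ENNReal.ofReal_le_ofReal_iff hq₂, le_div_iff₀ hm0] at h1
    set L := Real.log m / Real.log (Real.log m) with hLdef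
    have hL0 : 0 < L := by linarith
    have hLl : L ≤ Real.log m := div_le_self (by linarith) hy
    have h2 : 320 * Real.log m * L * (1 - θ₂) ≤ 16 * Real.log m := by
      calc 320 * Real.log m * L * (1 - θ₂) ≤ 320 * Real.log m * Real.log m * (1 - θ₂) := by
            have := sub_nonneg.2 hθ₂.2
            gcongr
        _ ≤ α * m * (1 - θ₂) :=
            mul_le_mul_of_nonneg_right (by rw [mul_assoc, ← sq]; linarith) (sub_nonneg.2 hθ₂.2)
        _ ≤ _ := by linarith
    have h3 : L * (1 - θ₂) ≤ 1 / 20 := by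
      have : Real.log m * (320 * (L * (1 - θ₂))) ≤ Real.log m * 16 := by linarith
      linarith [le_of_mul_le_mul_left this (by linarith)]
    have h4 : 1 - θ₂ ≤ 1 / 20 / L := by
      rw [le_div_iff₀ hL0]
      linarith
    have h5 : 1 / (10 * L) / 2 = 1 / 20 / L := by
      field_simp
      norm_num
    linarith
  · exact utilMeasure_not_separated_le hθ hq₁ (hq₁₂.le.trans hq₂1) hq₂ hq₂1 hθ₁ hDθ₂ B (m / 4) R
      (R / 5) (by omega) (Real.exp_pos _).le (union_tail_le h hC hnR) (card_tail_le h hC hnm hB)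
      (pair_tail_le h hC hnm hB') (large_tail_le h hC hnm hR)
      (local_tail_le h hC hnm hR hR' hB')

theorem IsLarge.le_of_le_mul (hn : IsLarge α β κ C n) (hC : 1 ≤ C) (hκ : 1 ≤ κ)
    (h : 10 ^ 6 * κ * n * Real.log n / Real.log (Real.log n) ≤ m) : n ≤ m := by
  have hL := hn.le_ratio
  have h1 : (n : ℝ) ≤ m := by
    calc (n : ℝ) = 1 * 1 * n * 1 := by ring
      _ ≤ 10 ^ 6 * κ * n * (Real.log n / Real.log (Real.log n)) := by
          gcongr
          · norm_num
          · linarith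
      _ ≤ m := by rwa [← mul_div_assoc]
  exact_mod_cast h1

/-- The lower bound on `m` can be restated with `log m / log log m` in place of
`log n / log log n`, at the cost of a factor two. -/
theorem IsLarge.mul_ratio_le (hn : IsLarge α β κ C n) (hm : IsLarge α β κ C m) (hC : 1 ≤ C)
    (hκ : 1 ≤ κ) (h : 10 ^ 6 * κ * n * Real.log n / Real.log (Real.log n) ≤ m) :
    5 * 10 ^ 5 * κ * n * (Real.log m / Real.log (Real.log m)) ≤ m := by
  have hnm : (n : ℝ) ≤ m := by exact_mod_cast hn.le_of_le_mul hC hκ h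
  have hn0 : (0 : ℝ) < n := by linarith [hn.ge hC]
  have hm0 : (0 : ℝ) < m := by linarith
  have hln := hn.log_ge hC
  have hlm := hm.log_ge hC
  have hyn := hn.one_le_loglog
  rcases le_total (m : ℝ) ((n : ℝ) ^ 2) with hmn | hmn
  · have h1 : Real.log m ≤ 2 * Real.log n := by
      have := Real.log_le_log hm0 hmn
      rwa [Real.log_pow, Nat.cast_ofNat] at this
    have h2 : Real.log (Real.log n) ≤ Real.log (Real.log m) :=
      Real.log_le_log (by linarith) (Real.log_le_log hn0 hnm)
    calc 5 * 10 ^ 5 * κ * n * (Real.log m / Real.log (Real.log m))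
        ≤ 5 * 10 ^ 5 * κ * n * (2 * Real.log n / Real.log (Real.log n)) := by gcongr
      _ = 10 ^ 6 * κ * n * Real.log n / Real.log (Real.log n) := by ring
      _ ≤ m := h
  · have h1 : (n : ℝ) ≤ √m := Real.le_sqrt_of_sq_le hmn
    have h2 : Real.log m / Real.log (Real.log m) ≤ Real.log m :=
      div_le_self (by linarith) hm.one_le_loglog
    have h0 : 0 ≤ Real.log m / Real.log (Real.log m) := by linarith [hm.le_ratio]
    calc 5 * 10 ^ 5 * κ * n * (Real.log m / Real.log (Real.log m))
        ≤ 5 * 10 ^ 5 * κ * √m * Real.log m := by gcongr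
      _ = √m * (5 * 10 ^ 5 * κ * Real.log m) := by ring
      _ ≤ √m * √m := by
          gcongr
          exact hm.log_le_sqrt
      _ = m := Real.mul_self_sqrt hm0.le

end Assembly

/-- Let `α, β > 0` and `C ≥ 1`.  There is a constant `K` (depending only on `α, β, C`)
such that for every `(α,β)`-PDF-bounded `D`, all sufficiently large `n`, every
`m ≥ 10^6·(β/α)·C·n·log n/log log n`, every weight vector with ratio at most `C`, and
any distinct agents `i, j`, the positive integer
`T = 100·⌈(β/α)·(w_i/w_j)·log m/log log m⌉` satisfies, for the weighted picking sequence
algorithm run on utilities drawn independently from `D`: (a) `t_i(m) ≥ T ≥ 1` (in every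
run); (b) with probability at least `1 - K/m³`, agent `i`'s `T`-th pick has value at
least `1/2`; (c) with probability at least `1 - K/m³`,
`∑_{k ∈ [T]} ∑_{ℓ ∈ [τ_k]} (1 - u_i(g^j_{k,ℓ})/u_i(g^i_k)) ≥ 2`. -/
theorem wps_key_lemma (α β C : ℝ) (hα : 0 < α) (hβ : 0 < β) (hC : 1 ≤ C) :
    ∃ K : ℝ, 0 < K ∧ ∃ N : ℕ,
      ∀ D : Measure ℝ, IsProbabilityMeasure D → PDFBounded α β D →
      ∀ n : ℕ, N ≤ n → ∀ m : ℕ,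
      10 ^ 6 * (β / α) * C * n * Real.log n / Real.log (Real.log n) ≤ (m : ℝ) →
      ∀ w : Fin n → ℝ, (∀ i, 0 < w i) → (∀ i j, w i ≤ C * w j) →
      ∀ i j : Fin n, i ≠ j →
      ∀ T : ℕ,
        T = 100 * ⌈(β / α) * (w i / w j) * Real.log m / Real.log (Real.log m)⌉₊ →
        (1 ≤ T ∧
          (∀ u : Fin n → Fin m → ℝ, ∀ picker : Fin m → Fin n, ∀ item : Fin m → Fin m,
            IsWPSRun w u picker item → T ≤ pickCount picker i m)) ∧
        ENNReal.ofReal (1 - K / m ^ 3) ≤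
          utilMeasure n m D
            {u | ∀ picker : Fin m → Fin n, ∀ item : Fin m → Fin m,
              IsWPSRun w u picker item → 1 / 2 ≤ pickVal u picker item i T} ∧
        ENNReal.ofReal (1 - K / m ^ 3) ≤
          utilMeasure n m D
            {u | ∀ picker : Fin m → Fin n, ∀ item : Fin m → Fin m,
              IsWPSRun w u picker item → 2 ≤ intervalSum u picker item i j T} := by
  have hev := (eventually_isLarge hα β (β / α * C) C)
  obtain ⟨a, ha⟩ := Filter.eventually_atTop.1 hev
  refine ⟨6, by norm_num, ⌈a⌉₊, fun D hDp hD n hn m hm w hw hwC i j hij T hT => ?_⟩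
  have hα' := hD.le hβ.le
  have hκ₀ : 1 ≤ β / α := (one_le_div hα).2 hα'
  have hκ : 1 ≤ β / α * C := one_le_mul_of_one_le_of_one_le hκ₀ hC
  rw [mul_assoc (10 ^ 6 : ℝ)] at hm
  have hnL : IsLarge α β (β / α * C) C n := ha n (Nat.ceil_le.1 hn)
  have hnm := hnL.le_of_le_mul hC hκ hm
  have hmL : IsLarge α β (β / α * C) C m :=
    ha m ((Nat.ceil_le.1 hn).trans (by exact_mod_cast hnm))
  have hstar := hnL.mul_ratio_le hmL hC hκ hm
  have hm0 : (0 : ℝ) < m := by linarith [hmL.ge hC]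
  have hl := hmL.log_ge hC
  have hy := hmL.one_le_loglog
  have hL := hmL.le_ratio
  have hκy := hmL.le_loglog
  have hδ : Real.exp (-(3 * Real.log m)) = 1 / (m : ℝ) ^ 3 := by
    rw [Real.exp_neg, mul_comm, Real.exp_mul, Real.exp_log hm0, one_div]
    norm_cast
  rw [mul_div_assoc] at hT
  set L := Real.log m / Real.log (Real.log m) with hLdef
  set κ := β / α * C with hκdef
  have hLy : L * Real.log (Real.log m) = Real.log m := div_mul_cancel₀ _ (by linarith)
  have hL0 : 0 < L := by linarith
  have hLκ : L ≤ κ * L := le_mul_of_one_le_left hL0.le hκ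
  have hwi := hw i
  have hwj := hw j
  have hX0 : 0 < β / α * (w i / w j) * L := by positivity
  have hTle : (T : ℝ) ≤ 100 * (β / α * (w i / w j) * L + 1) := by
    rw [hT, Nat.cast_mul, Nat.cast_ofNat]
    gcongr
    exact (Nat.ceil_lt_add_one hX0.le).le
  have hTge : 100 * (β / α * (w i / w j) * L) ≤ (T : ℝ) := by
    rw [hT, Nat.cast_mul, Nat.cast_ofNat]
    gcongr
    exact Nat.le_ceil _
  have hT1 : 1 ≤ T := by
    have : 1 ≤ ⌈β / α * (w i / w j) * L⌉₊ := Nat.one_le_ceil_iff.2 hX0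
    omega
  set R := ⌈101 * (κ * L)⌉₊ with hRdef
  have hRge : 101 * (κ * L) ≤ R := Nat.le_ceil _
  have hRle : (R : ℝ) ≤ 102 * (κ * L) := by
    have := (Nat.ceil_lt_add_one (show 0 ≤ 101 * (κ * L) by positivity)).le
    linarith
  have hTR : ∀ k, 1 + T * (w k / w i) ≤ (R : ℝ) := by
    intro k
    have hwk := hw k
    have h1 : w k / w i ≤ C := (div_le_iff₀ hwi).2 (hwC k i)
    have h2 : w k / w j ≤ C := (div_le_iff₀ hwj).2 (hwC k j)
    calc 1 + T * (w k / w i) ≤ 1 + 100 * (β / α * (w i / w j) * L + 1) * (w k / w i) := by gcongr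
      _ = 1 + 100 * (β / α * (w k / w j) * L) + 100 * (w k / w i) := by
            field_simp
            ring
      _ ≤ 1 + 100 * (β / α * C * L) + 100 * C := by gcongr
      _ ≤ R := by linarith
  have hnR : 1000 * (n * R : ℝ) ≤ m := by
    calc 1000 * (n * R : ℝ) ≤ 1000 * (n * (102 * (κ * L))) := by gcongr
      _ = 102000 * (κ * n * L) := by ring
      _ ≤ 5 * 10 ^ 5 * (κ * n * L) := by gcongr; norm_num
      _ ≤ m := by linarith
  have hnRm : n * R < m := by
    have : (n * R : ℝ) < m := by linarith
    exact_mod_cast this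
  have hR2 : 2 * R ≤ Real.log m := by
    have : L * (204 * κ) ≤ L * Real.log (Real.log m) := by gcongr
    linarith
  have hRL : 101 * L ≤ R := by linarith
  obtain ⟨B, hB, hB'⟩ : ∃ B : ℕ, 128 * Real.log m ≤ B ∧ B ≤ 129 * Real.log m :=
    ⟨⌈128 * Real.log m⌉₊, Nat.le_ceil _, by
      linarith [Nat.ceil_lt_add_one (show 0 ≤ 128 * Real.log m by linarith)]⟩
  obtain ⟨θ, hθ, hbad⟩ := hmL.exists_threshold hC hα hβ.le hD hnm hnR hR2 hRL hB hB'
  rw [hδ] at hbad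
  set ε := 1 / (10 * L) with hεdef
  have hε0 : 0 < ε := by positivity
  have hε1 : ε ≤ 1 := by rw [hεdef, div_le_one (by positivity)]; linarith
  refine ⟨⟨hT1, fun u picker item h => h.le_pickCount hw hTR hnRm⟩, ?_, ?_⟩
  · refine ofReal_one_sub_le_measure _ (by positivity) ?_
    refine (measure_mono fun u hu => ?_).trans (hbad.trans (ENNReal.ofReal_le_ofReal ?_))
    · rintro ⟨⟨τ, hτθ, hτ⟩, -⟩
      refine hu fun picker item h => ?_
      linarith [h.le_pickVal hw hTR hnRm hT1 hτθ hτ]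
    · rw [mul_one_div]
      gcongr
      norm_num
  · obtain ⟨r, hr, hr'⟩ : ∃ r : ℕ, 40 * L ≤ r ∧ r ≤ 41 * L :=
      ⟨⌈40 * L⌉₊, Nat.le_ceil _, by linarith [Nat.ceil_lt_add_one (show 0 ≤ 40 * L by linarith)]⟩
    have hq : D.real (Set.Ici (1 - ε)) ≤ β * ε := by
      refine ENNReal.toReal_le_of_le_ofReal (by positivity) ?_
      simpa using hD.measure_Ici_le hβ.le (1 - ε)
    have hinter := utilMeasure_le_card_inter (D := D) (n := n) (m := m) (θ := 1 - ε) (θ' := θ)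
      (q := D.real (Set.Ici (1 - ε))) measureReal_nonneg
      (ENNReal.ofReal_toReal (measure_ne_top _ _)).symm hij B r
    have htail := level_tail_le hmL hC hβ.le hB' measureReal_nonneg hq hr
    rw [hδ] at htail
    have hcount : r + 4 / ε + 1 ≤ (T - 1) * (w j / w i) := by
      have h1 : w j / w i ≤ C := (div_le_iff₀ hwi).2 (hwC j i)
      have h2 : 4 / ε = 40 * L := by
        rw [hεdef]
        field_simp
        norm_num
      have h3 : 100 * (β / α * L) ≤ T * (w j / w i) := by
        calc 100 * (β / α * L) = 100 * (β / α * (w i / w j) * L) * (w j / w i) := by field_simp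
          _ ≤ _ := by gcongr
      have h4 : L ≤ β / α * L := le_mul_of_one_le_left hL0.le hκ₀
      rw [h2]
      linarith
    refine ofReal_one_sub_le_measure _ (by positivity) ?_
    calc _ ≤ utilMeasure n m D
          ({u | ¬ (Separated θ R u ∧ ∀ k, (upperItems θ (u k)).card ≤ B)} ∪
            {u | (upperItems θ (u j)).card ≤ B ∧
              r ≤ (upperItems (1 - ε) (u i) ∩ upperItems θ (u j)).card}) := by
          refine measure_mono fun u hu => ?_
          by_contra hcon
          rw [Set.mem_union, not_or, Set.mem_ofPred_eq, Set.mem_ofPred_eq, not_not, not_and,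
            not_le] at hcon
          obtain ⟨⟨⟨τ, hτθ, hτ⟩, hcard⟩, hr⟩ := hcon
          exact hu fun picker item h => h.two_le_intervalSum hw hTR hnRm hT1 hτθ hτ hε0 hε1 hθ
            (hr (hcard j)).le hcount
      _ ≤ ENNReal.ofReal (5 * (1 / m ^ 3)) + ENNReal.ofReal (1 / m ^ 3) :=
          (measure_union_le _ _).trans
            (add_le_add hbad (hinter.trans (ENNReal.ofReal_le_ofReal htail)))
      _ = _ := by
          rw [← ENNReal.ofReal_add (by positivity) (by positivity)]
          congr 1
          ring
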